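/- Assume V ∈ C¹(ℝ^N) satisfies (V1) and (V2). If c ∈ [0, ν₀) is such that condition (V^c) holds, then the coercivity condition (1.7) holds; consequently there exists q_c ∈ C²(ℝ, ℝ^N) with q̈_c(t) = ∇V(q_c(t)) for all t ∈ ℝ, inf_{t∈ℝ} dist(q_c(t), 𝒱^c₋) = 0, inf_{t∈ℝ} dist(q_c(t), 𝒱^c₊) = 0, and ½|q̇_c(t)|² − V(q_c(t)) = −c for all t ∈ ℝ. -/

import Mathlib

open MeasureTheory Filter Metric Set Topology
open scoped ENNReal

noncomputable section

/-- Euclidean space `ℝ^N`. -/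
abbrev Euc (N : ℕ) := EuclideanSpace ℝ (Fin N)

/-- Distance between two subsets of a metric space. -/
def setDist {E : Type*} [PseudoMetricSpace E] (A B : Set E) : ℝ :=
  sInf ((fun p : E × E => dist p.1 p.2) '' (A ×ˢ B))

/-- `q ∈ H¹_loc(ℝ, ℝ^N)` with derivative `q'`: `q` is locally absolutely continuous with
locally square-integrable derivative `q'`. -/
def IsH1loc {N : ℕ} (q q' : ℝ → Euc N) : Prop :=
  LocallyIntegrable q' volume ∧
  (∀ a b : ℝ, IntegrableOn (fun t => ‖q' t‖ ^ 2) (Icc a b) volume) ∧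
  (∀ a b : ℝ, q b - q a = ∫ t in a..b, q' t)

/-- The action `J_{c,I}(q) = ∫_I (½|q̇(t)|² + (V(q(t)) − c)) dt`, valued in `[0,+∞]`. -/
def lagJ {N : ℕ} (V : Euc N → ℝ) (c : ℝ) (q q' : ℝ → Euc N) (I : Set ℝ) : ℝ≥0∞ :=
  ∫⁻ t in I, ENNReal.ofReal (2⁻¹ * ‖q' t‖ ^ 2 + (V (q t) - c))

/-- The admissible class `Γ_c` of pairs (function, derivative): `q ∈ H¹_loc`,
`V(q(t)) ≥ c` for all `t`, `liminf_{t→−∞} dist(q(t),𝒱⁻) = 0` and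
`liminf_{t→+∞} dist(q(t),𝒱⁺) = 0`. -/
def Gamma {N : ℕ} (V : Euc N → ℝ) (c : ℝ) (Vm Vp : Set (Euc N)) :
    Set ((ℝ → Euc N) × (ℝ → Euc N)) :=
  {p | IsH1loc p.1 p.2 ∧ (∀ t, c ≤ V (p.1 t)) ∧
    (∀ ε > 0, ∃ᶠ t in atBot, infDist (p.1 t) Vm < ε) ∧
    (∀ ε > 0, ∃ᶠ t in atTop, infDist (p.1 t) Vp < ε)}

/-- `m_c := inf_{q ∈ Γ_c} J_c(q)`. -/
def mc {N : ℕ} (V : Euc N → ℝ) (c : ℝ) (Vm Vp : Set (Euc N)) : ℝ≥0∞ :=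
  ⨅ (p) (_ : p ∈ Gamma V c Vm Vp), lagJ V c p.1 p.2 univ

/-- Coercivity condition (1.7) for the constant `R`. -/
def Coercive {N : ℕ} (V : Euc N → ℝ) (c : ℝ) (Vm Vp : Set (Euc N)) (R : ℝ) : Prop :=
  mc V c Vm Vp =
    ⨅ (p) (_ : p ∈ Gamma V c Vm Vp) (_ : ∀ t, ‖p.1 t‖ ≤ R), lagJ V c p.1 p.2 univ

/-!
Put `W = (V - c)⁺`. In a minimizing sequence for the action of `W` between the wells `𝒱⁻` and `𝒱⁺`,
cutting a curve off once it is close to a well costs little action, so after a time translation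
each curve lies near `𝒱⁻` in the far past and near `𝒱⁺` in the far future, uniformly along the
sequence; a weak limit is therefore a minimizer. Variations supported where it avoids the wells give
`q̈ = ∇V(q)` there. Scaling time, `t ↦ q (l * t)`, yields the virial identity `½ ∫ |q̇|² = ∫ W(q)`,
which forces the constant `½|q̇|² - (V(q) - c)` to vanish. If the minimizer reaches a well in finite
time, its velocity tends to `0` there, so reflecting time at that instant continues the solution;
with contact on both sides the continuation is periodic.
-/

section Lagrangian

variable {E : Type*} [NormedAddCommGroup E]

/-- The Lagrangian `½|u|² + W(q)` along a curve `q` with derivative `u`. -/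
def lagrangian (W : E → ℝ) (q u : ℝ → E) (t : ℝ) : ℝ := 2⁻¹ * ‖u t‖ ^ 2 + W (q t)

/-- The action of a curve `q` with derivative `u`. -/
def action (W : E → ℝ) (q u : ℝ → E) : ℝ := ∫ t, lagrangian W q u t

theorem lagrangian_nonneg {W : E → ℝ} (hW : ∀ x, 0 ≤ W x) (q u : ℝ → E) (t : ℝ) :
    0 ≤ lagrangian W q u t :=
  add_nonneg (by positivity) (hW _)

theorem memLp_two_intervalIntegrable {u : ℝ → E} (hu : MemLp u 2 volume) (a b : ℝ) :
    IntervalIntegrable u volume a b :=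
  ((hu.locallyIntegrable (by norm_num)).integrableOn_isCompact isCompact_uIcc).intervalIntegrable

theorem action_piecewise {W : E → ℝ} {q₁ u₁ q₂ u₂ : ℝ → E} {a : ℝ}
    (h₁ : IntegrableOn (lagrangian W q₁ u₁) (Iic a))
    (h₂ : IntegrableOn (lagrangian W q₂ u₂) (Ioi a)) :
    action W ((Iic a).piecewise q₁ q₂) ((Iic a).piecewise u₁ u₂) =
      (∫ t in Iic a, lagrangian W q₁ u₁ t) + ∫ t in Ioi a, lagrangian W q₂ u₂ t := by
  rw [← compl_Iic] at h₂ ⊢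
  rw [← integral_piecewise measurableSet_Iic h₁ h₂]
  refine integral_congr_ae (Eventually.of_forall fun t => ?_)
  by_cases ht : t ∈ Iic a <;> simp [lagrangian, ht]

end Lagrangian

section Curves

variable {E : Type*} [NormedAddCommGroup E] [NormedSpace ℝ E]

/-- `q` is a locally absolutely continuous curve with derivative `u ∈ L²(ℝ)`. The derivative is
carried as separate data, tied to `q` by the fundamental theorem of calculus. -/
structure HasL2Deriv (q u : ℝ → E) : Prop where
  memLp : MemLp u 2 volume
  sub_eq_integral : ∀ a b : ℝ, q b - q a = ∫ t in a..b, u t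

/-- Curves along which both the kinetic and the potential part of the action are integrable. -/
structure FiniteAction (W : E → ℝ) (q u : ℝ → E) : Prop extends HasL2Deriv q u where
  integrable_potential : Integrable (fun t => W (q t))

variable {W : E → ℝ} {q u q₁ u₁ q₂ u₂ : ℝ → E}

namespace HasL2Deriv

theorem intervalIntegrable (h : HasL2Deriv q u) (a b : ℝ) : IntervalIntegrable u volume a b :=
  memLp_two_intervalIntegrable h.memLp a b

theorem eq_add_integral (h : HasL2Deriv q u) (a t : ℝ) : q t = q a + ∫ s in a..t, u s := by
  rw [← h.sub_eq_integral, add_sub_cancel]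

theorem of_eq_add_integral (hu : MemLp u 2 volume) (a : ℝ)
    (hq : ∀ t, q t = q a + ∫ s in a..t, u s) : HasL2Deriv q u where
  memLp := hu
  sub_eq_integral b c := by
    have hi := memLp_two_intervalIntegrable hu
    rw [hq b, hq c, add_sub_add_left_eq_sub,
      intervalIntegral.integral_interval_sub_left (hi a c) (hi a b)]

theorem continuous (h : HasL2Deriv q u) : Continuous q := by
  rw [funext (h.eq_add_integral 0)]
  exact continuous_const.add (intervalIntegral.continuous_primitive h.intervalIntegrable 0)

theorem integrable_norm_sq (h : HasL2Deriv q u) : Integrable (fun t => ‖u t‖ ^ 2) :=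
  (memLp_two_iff_integrable_sq_norm h.memLp.1).1 h.memLp

theorem comp_affine (h : HasL2Deriv q u) {l : ℝ} (hl : l ≠ 0) (k : ℝ) :
    HasL2Deriv (fun t => q (l * t + k)) (fun t => l • u (l * t + k)) where
  memLp := by
    have hqmp : Measure.QuasiMeasurePreserving (fun t : ℝ => l * t + k) volume volume := by
      refine (measurePreserving_add_right volume k).quasiMeasurePreserving.comp ⟨by fun_prop, ?_⟩
      rw [Real.map_volume_mul_left hl]
      exact Measure.smul_absolutelyContinuous
    refine MemLp.const_smul ?_ l
    refine (memLp_two_iff_integrable_sq_norm (h.memLp.1.comp_quasiMeasurePreserving hqmp)).2 ?_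
    exact (h.integrable_norm_sq.comp_add_right k).comp_mul_left' hl
  sub_eq_integral a b := by
    rw [intervalIntegral.integral_smul, h.sub_eq_integral,
      intervalIntegral.smul_integral_comp_mul_add]

theorem piecewise (h₁ : HasL2Deriv q₁ u₁) (h₂ : HasL2Deriv q₂ u₂) {a : ℝ} (ha : q₁ a = q₂ a) :
    HasL2Deriv ((Iic a).piecewise q₁ q₂) ((Iic a).piecewise u₁ u₂) := by
  refine of_eq_add_integral (h₁.memLp.restrict _ |>.piecewise measurableSet_Iic
    (h₂.memLp.restrict _)) a fun t => ?_
  rw [piecewise_eq_of_mem _ _ _ self_mem_Iic]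
  rcases le_or_gt t a with ht | ht
  · rw [piecewise_eq_of_mem _ _ _ (mem_Iic.2 ht), h₁.eq_add_integral a t]
    congr 1
    refine intervalIntegral.integral_congr fun s hs => (piecewise_eq_of_mem _ _ _ ?_).symm
    exact (uIcc_of_ge ht ▸ hs).2
  · rw [piecewise_eq_of_notMem _ _ _ (notMem_Iic.2 ht), h₂.eq_add_integral a t, ha]
    congr 1
    rw [intervalIntegral.integral_of_le ht.le, intervalIntegral.integral_of_le ht.le]
    exact setIntegral_congr_fun measurableSet_Ioc fun s hs =>
      (piecewise_eq_of_notMem _ _ _ (notMem_Iic.2 hs.1)).symm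

end HasL2Deriv

namespace FiniteAction

theorem integrable_lagrangian (h : FiniteAction W q u) : Integrable (lagrangian W q u) :=
  (h.integrable_norm_sq.const_mul _).add h.integrable_potential

theorem action_eq (h : FiniteAction W q u) :
    action W q u = 2⁻¹ * (∫ t, ‖u t‖ ^ 2) + ∫ t, W (q t) := by
  unfold action lagrangian
  rw [integral_add (h.integrable_norm_sq.const_mul _) h.integrable_potential, integral_const_mul]

theorem comp_affine (h : FiniteAction W q u) {l : ℝ} (hl : l ≠ 0) (k : ℝ) :
    FiniteAction W (fun t => q (l * t + k)) (fun t => l • u (l * t + k)) where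
  toHasL2Deriv := h.toHasL2Deriv.comp_affine hl k
  integrable_potential := (h.integrable_potential.comp_add_right k).comp_mul_left' hl

theorem action_comp_affine (h : FiniteAction W q u) {l : ℝ} (hl : l ≠ 0) (k : ℝ) :
    action W (fun t => q (l * t + k)) (fun t => l • u (l * t + k)) =
      |l⁻¹| * (2⁻¹ * l ^ 2 * (∫ t, ‖u t‖ ^ 2) + ∫ t, W (q t)) := by
  have integral_comp (f : ℝ → ℝ) : ∫ t, f (l * t + k) = |l⁻¹| * ∫ t, f t := by
    rw [Measure.integral_comp_mul_left (fun t => f (t + k)) l, integral_add_right_eq_self f k,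
      smul_eq_mul]
  have hnorm (t : ℝ) : ‖l • u (l * t + k)‖ ^ 2 = l ^ 2 * ‖u (l * t + k)‖ ^ 2 := by
    rw [norm_smul, mul_pow, Real.norm_eq_abs, sq_abs]
  rw [(h.comp_affine hl k).action_eq, integral_comp fun t => W (q t)]
  simp only [hnorm]
  rw [integral_const_mul, integral_comp fun t => ‖u t‖ ^ 2]
  ring

theorem setIntegral_lagrangian_mono (h : FiniteAction W q u) (hW : ∀ x, 0 ≤ W x) {s t : Set ℝ}
    (hst : s ⊆ t) : ∫ r in s, lagrangian W q u r ≤ ∫ r in t, lagrangian W q u r :=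
  setIntegral_mono_set h.integrable_lagrangian.integrableOn
    (Eventually.of_forall (lagrangian_nonneg hW q u)) (Eventually.of_forall hst)

theorem setIntegral_lagrangian_le_action (h : FiniteAction W q u) (hW : ∀ x, 0 ≤ W x)
    (s : Set ℝ) : ∫ r in s, lagrangian W q u r ≤ action W q u := by
  simpa only [setIntegral_univ, action] using h.setIntegral_lagrangian_mono hW (subset_univ s)

/-- Young's inequality `√(2η)|u| ≤ ½|u|² + η`, integrated. -/
theorem sqrt_mul_norm_sub_le (h : FiniteAction W q u) {s t η : ℝ} (hst : s ≤ t) (hη : 0 ≤ η)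
    (hW : ∀ r ∈ Icc s t, η ≤ W (q r)) :
    √(2 * η) * ‖q t - q s‖ ≤ ∫ r in Ioc s t, lagrangian W q u r := by
  rw [h.sub_eq_integral, intervalIntegral.integral_of_le hst]
  have hu : IntegrableOn u (Ioc s t) := (h.intervalIntegrable s t).1
  calc √(2 * η) * ‖∫ r in Ioc s t, u r‖
      ≤ √(2 * η) * ∫ r in Ioc s t, ‖u r‖ := by
        gcongr; exact norm_integral_le_integral_norm _
    _ = ∫ r in Ioc s t, √(2 * η) * ‖u r‖ := by rw [integral_const_mul]
    _ ≤ ∫ r in Ioc s t, lagrangian W q u r := by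
        refine setIntegral_mono_on (hu.norm.const_mul _) h.integrable_lagrangian.integrableOn
          measurableSet_Ioc fun r hr => ?_
        have hWr := hW r ⟨hr.1.le, hr.2⟩
        have hsq := Real.sq_sqrt (show 0 ≤ 2 * η by positivity)
        unfold lagrangian
        nlinarith [sq_nonneg (√(2 * η) - ‖u r‖)]

end FiniteAction

theorem FiniteAction.piecewise (h₁ : HasL2Deriv q₁ u₁) (h₂ : HasL2Deriv q₂ u₂) {a : ℝ}
    (ha : q₁ a = q₂ a) (hW₁ : IntegrableOn (fun t => W (q₁ t)) (Iic a))
    (hW₂ : IntegrableOn (fun t => W (q₂ t)) (Ioi a)) :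
    FiniteAction W ((Iic a).piecewise q₁ q₂) ((Iic a).piecewise u₁ u₂) where
  toHasL2Deriv := h₁.piecewise h₂ ha
  integrable_potential := by
    rw [← compl_Iic] at hW₂
    refine (Integrable.piecewise measurableSet_Iic hW₁ hW₂).congr
      (Eventually.of_forall fun t => ?_)
    by_cases ht : t ∈ Iic a <;> simp [ht]

end Curves

section Crossing

variable {f : ℝ → ℝ} {s t a b : ℝ}

theorem exists_last_visit (hf : Continuous f) (hst : s ≤ t) (hs : f s ≤ a) (ht : a ≤ f t) :
    ∃ r ∈ Icc s t, f r = a ∧ ∀ x ∈ Icc r t, a ≤ f x := by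
  obtain ⟨z, hz, hza⟩ := intermediate_value_Icc hst hf.continuousOn ⟨hs, ht⟩
  have hc : IsCompact (Icc s t ∩ f ⁻¹' {a}) :=
    isCompact_Icc.inter_right (isClosed_singleton.preimage hf)
  obtain ⟨r, ⟨hr, hra⟩, hmax⟩ := hc.exists_isGreatest ⟨z, hz, hza⟩
  refine ⟨r, hr, hra, fun x hx => le_of_not_gt fun hxa => ?_⟩
  obtain ⟨y, hy, hya⟩ := intermediate_value_Icc hx.2 hf.continuousOn ⟨hxa.le, ht⟩
  have hyr : y ≤ r := hmax ⟨⟨(hr.1.trans hx.1).trans hy.1, hy.2⟩, hya⟩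
  exact hxa.ne (by rw [le_antisymm hy.1 (hyr.trans hx.1), hya])

theorem exists_first_visit (hf : Continuous f) (hst : s ≤ t) (hs : f s ≤ b) (ht : b ≤ f t) :
    ∃ r ∈ Icc s t, f r = b ∧ ∀ x ∈ Icc s r, f x ≤ b := by
  obtain ⟨r, hr, hrb, hle⟩ := exists_last_visit (f := fun x => -f (-x)) (s := -t) (t := -s)
    (a := -b) (by fun_prop) (neg_le_neg hst) (by simpa using ht) (by simpa using hs)
  refine ⟨-r, ⟨by linarith [hr.2], by linarith [hr.1]⟩, by linarith, fun x hx => ?_⟩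
  simpa using hle (-x) ⟨by linarith [hx.2], by linarith [hx.1]⟩

theorem exists_crossing (hf : Continuous f) (hst : s ≤ t) (hab : a ≤ b) (hs : f s ≤ a)
    (ht : b ≤ f t) :
    ∃ s' t', s' ≤ t' ∧ t' ≤ t ∧ f s' = a ∧ f t' = b ∧ ∀ x ∈ Icc s' t', f x ∈ Icc a b := by
  obtain ⟨t', ht', htb, hle⟩ := exists_first_visit hf hst (hs.trans hab) ht
  obtain ⟨s', hs', hsa, hge⟩ := exists_last_visit hf ht'.1 hs (hab.trans_eq htb.symm)
  exact ⟨s', t', hs'.2, ht'.2, hsa, htb,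
    fun x hx => ⟨hge x hx, hle x ⟨hs'.1.trans hx.1, hx.2⟩⟩⟩

end Crossing

section ConnectingCurves

variable {E : Type*} [NormedAddCommGroup E] [NormedSpace ℝ E] {W : E → ℝ} {A B : Set E}
  {q u : ℝ → E}

/-- Finite action curves that come arbitrarily close to `A` at `-∞` and to `B` at `+∞`. -/
structure ConnectingCurve (W : E → ℝ) (A B : Set E) (q u : ℝ → E) : Prop
    extends FiniteAction W q u where
  frequently_near_left : ∀ ε > 0, ∃ᶠ t in atBot, infDist (q t) A < ε
  frequently_near_right : ∀ ε > 0, ∃ᶠ t in atTop, infDist (q t) B < ε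

namespace ConnectingCurve

theorem comp_affine (h : ConnectingCurve W A B q u) {l : ℝ} (hl : 0 < l) (k : ℝ) :
    ConnectingCurve W A B (fun t => q (l * t + k)) (fun t => l • u (l * t + k)) where
  toFiniteAction := h.toFiniteAction.comp_affine hl.ne' k
  frequently_near_left ε hε := by
    have hlim : Tendsto (fun s : ℝ => (s - k) / l) atBot atBot :=
      (tendsto_atBot_add_const_right _ (-k) tendsto_id).atBot_div_const hl
    refine hlim.frequently ((h.frequently_near_left ε hε).mono fun s hs => ?_)
    rwa [mul_div_cancel₀ _ hl.ne', sub_add_cancel]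
  frequently_near_right ε hε := by
    have hlim : Tendsto (fun s : ℝ => (s - k) / l) atTop atTop :=
      (tendsto_atTop_add_const_right _ (-k) tendsto_id).atTop_div_const hl
    refine hlim.frequently ((h.frequently_near_right ε hε).mono fun s hs => ?_)
    rwa [mul_div_cancel₀ _ hl.ne', sub_add_cancel]

theorem translate (h : ConnectingCurve W A B q u) (k : ℝ) :
    ConnectingCurve W A B (fun t => q (t + k)) (fun t => u (t + k)) := by
  simpa only [one_mul, one_smul] using h.comp_affine one_pos k

theorem reverse (h : ConnectingCurve W A B q u) :
    ConnectingCurve W B A (fun t => q (-t)) (fun t => -u (-t)) where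
  toFiniteAction := by
    simpa only [neg_mul, one_mul, add_zero, neg_smul, one_smul] using
      h.toFiniteAction.comp_affine (l := -1) (by norm_num) 0
  frequently_near_left ε hε := tendsto_neg_atTop_atBot.frequently <|
    (h.frequently_near_right ε hε).mono fun s hs => by rwa [neg_neg]
  frequently_near_right ε hε := tendsto_neg_atBot_atTop.frequently <|
    (h.frequently_near_left ε hε).mono fun s hs => by rwa [neg_neg]

end ConnectingCurve

theorem FiniteAction.action_translate (h : FiniteAction W q u) (k : ℝ) :
    action W (fun t => q (t + k)) (fun t => u (t + k)) = action W q u := by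
  have := h.action_comp_affine one_ne_zero k
  simp only [one_mul, one_smul] at this
  rw [this, h.action_eq]
  norm_num

theorem FiniteAction.action_reverse (h : FiniteAction W q u) :
    action W (fun t => q (-t)) (fun t => -u (-t)) = action W q u := by
  have := h.action_comp_affine (l := -1) (by norm_num) 0
  simp only [neg_mul, one_mul, add_zero, neg_smul, one_smul] at this
  rw [this, h.action_eq]
  norm_num

theorem exists_segment_curve [CompleteSpace E] (x y : E) (a : ℝ) :
    ∃ q, HasL2Deriv q ((Ioc (a - 1) a).indicator fun _ => x - y) ∧
      ∀ t ≤ a, q t = x - min (a - t) 1 • (x - y) := by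
  have hu : MemLp ((Ioc (a - 1) a).indicator fun _ => x - y) 2 volume :=
    memLp_indicator_const _ measurableSet_Ioc _ (Or.inr (by simp))
  refine ⟨fun t => x + ∫ s in a..t, (Ioc (a - 1) a).indicator (fun _ => x - y) s,
    .of_eq_add_integral hu a fun t => by simp, fun t ht => ?_⟩
  have hlen : volume.real (Ioc (max t (a - 1)) a) = min (a - t) 1 := by
    rw [Real.volume_real_Ioc_of_le (max_le ht (by linarith)), ← min_sub_sub_left, sub_sub_cancel]
  change x + ∫ s in a..t, (Ioc (a - 1) a).indicator (fun _ => x - y) s = _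
  rw [intervalIntegral.integral_of_ge ht, setIntegral_indicator measurableSet_Ioc,
    Ioc_inter_Ioc, setIntegral_const, min_self, hlen, ← sub_eq_add_neg]

theorem exists_ramp [CompleteSpace E] (hW : Continuous W) {x y : E} (hy : W y = 0) {b : ℝ}
    (hb : ∀ z ∈ segment ℝ y x, W z ≤ b) (a : ℝ) :
    ∃ q u, HasL2Deriv q u ∧ q a = x ∧ (∀ t ≤ a - 1, q t = y) ∧
      IntegrableOn (fun t => W (q t)) (Iic a) ∧
      ∫ t in Iic a, lagrangian W q u t ≤ 2⁻¹ * ‖x - y‖ ^ 2 + b := by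
  obtain ⟨q, hq, hqa⟩ := exists_segment_curve x y a
  have hrest : ∀ t ≤ a - 1, q t = y := fun t ht => by
    rw [hqa t (by linarith), min_eq_right (by linarith), one_smul, sub_sub_cancel]
  have hseg : ∀ t ∈ Ioc (a - 1) a, q t ∈ segment ℝ y x := fun t ht => by
    rw [segment_symm, segment_eq_image', hqa t ht.2, min_eq_left (by linarith [ht.1])]
    exact ⟨a - t, ⟨by linarith [ht.2], by linarith [ht.1]⟩, by module⟩
  have hdiff : ∀ t ∈ Iic a \ Ioc (a - 1) a, t ≤ a - 1 := fun t ht =>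
    le_of_not_gt fun h => ht.2 ⟨h, ht.1⟩
  have hint : IntegrableOn (fun t => W (q t)) (Iic a) :=
    ((hW.comp hq.continuous).integrableOn_Ioc (a := a - 1) (b := a)).of_forall_sdiff_eq_zero
      measurableSet_Iic fun t ht => by
        simp [hrest t (hdiff t ht), hy]
  refine ⟨q, _, hq, by simp [hqa a le_rfl], hrest, hint, ?_⟩
  calc ∫ t in Iic a, lagrangian W q ((Ioc (a - 1) a).indicator fun _ => x - y) t
      ≤ ∫ t in Iic a, (Ioc (a - 1) a).indicator (fun _ => 2⁻¹ * ‖x - y‖ ^ 2 + b) t := by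
        refine setIntegral_mono_on ((hq.integrable_norm_sq.const_mul _).integrableOn.add hint)
          ((integrable_indicator_iff measurableSet_Ioc).2
            (integrableOn_const (by simp))).integrableOn measurableSet_Iic fun t ht => ?_
        by_cases hmem : t ∈ Ioc (a - 1) a
        · simpa [lagrangian, hmem] using hb _ (hseg t hmem)
        · simp [lagrangian, hmem, hrest t (hdiff t ⟨ht, hmem⟩), hy]
    _ = 2⁻¹ * ‖x - y‖ ^ 2 + b := by
        rw [setIntegral_indicator measurableSet_Ioc, inter_eq_right.2 Ioc_subset_Iic_self]
        simp

/-- The surgery: replace `q` before the time `a` by a straight segment issuing from `y`. -/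
theorem exists_connectingCurve_action_le [CompleteSpace E] (hW : Continuous W)
    (h : FiniteAction W q u) (hB : ∀ ε > 0, ∃ᶠ t in atTop, infDist (q t) B < ε) (a : ℝ) {y : E}
    (hyA : y ∈ A) (hy : W y = 0) {b : ℝ} (hb : ∀ z ∈ segment ℝ y (q a), W z ≤ b) :
    ∃ q' u', ConnectingCurve W A B q' u' ∧
      action W q' u' ≤ 2⁻¹ * ‖q a - y‖ ^ 2 + b + ∫ t in Ioi a, lagrangian W q u t := by
  obtain ⟨q₁, u₁, h₁, hqa, hrest, hint, hle⟩ := exists_ramp hW hy hb a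
  refine ⟨(Iic a).piecewise q₁ q, (Iic a).piecewise u₁ u,
    ⟨.piecewise h₁ h.toHasL2Deriv hqa hint h.integrable_potential.integrableOn, fun ε hε => ?_,
      fun ε hε => ?_⟩, ?_⟩
  · refine Eventually.frequently ?_
    filter_upwards [eventually_le_atBot (a - 1)] with t ht
    rw [piecewise_eq_of_mem _ _ _ (mem_Iic.2 (by linarith)), hrest t ht,
      infDist_zero_of_mem hyA]
    exact hε
  · refine ((hB ε hε).and_eventually (eventually_gt_atTop a)).mono fun t ht => ?_
    rw [piecewise_eq_of_notMem _ _ _ (notMem_Iic.2 ht.2)]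
    exact ht.1
  · rw [action_piecewise ((h₁.integrable_norm_sq.const_mul _).integrableOn.add hint)
      h.integrable_lagrangian.integrableOn]
    gcongr

end ConnectingCurves

section Wells

variable {E : Type*} [MetricSpace E] {W : E → ℝ} {A B : Set E}

/-- A nonnegative potential whose zero set splits into two disjoint nonempty compact wells `A` and
`B`, and which stays away from zero at infinity. -/
structure TwoWell (W : E → ℝ) (A B : Set E) : Prop where
  continuous : Continuous W
  nonneg : ∀ x, 0 ≤ W x
  eq_zero_iff : ∀ {x}, W x = 0 ↔ x ∈ A ∪ B
  isCompact_left : IsCompact A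
  isCompact_right : IsCompact B
  nonempty_left : A.Nonempty
  nonempty_right : B.Nonempty
  disjoint : Disjoint A B
  coercive : ∃ η > 0, ∀ᶠ x in Bornology.cobounded E, η ≤ W x

namespace TwoWell

theorem symm (w : TwoWell W A B) : TwoWell W B A where
  continuous := w.continuous
  nonneg := w.nonneg
  eq_zero_iff := by rw [union_comm]; exact w.eq_zero_iff
  isCompact_left := w.isCompact_right
  isCompact_right := w.isCompact_left
  nonempty_left := w.nonempty_right
  nonempty_right := w.nonempty_left
  disjoint := w.disjoint.symm
  coercive := w.coercive

theorem eq_zero_left (w : TwoWell W A B) {x : E} (hx : x ∈ A) : W x = 0 :=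
  w.eq_zero_iff.2 (Or.inl hx)

theorem isClosed_union (w : TwoWell W A B) : IsClosed (A ∪ B) :=
  w.isCompact_left.isClosed.union w.isCompact_right.isClosed

theorem exists_le_infDist_add_infDist (w : TwoWell W A B) :
    ∃ d > 0, ∀ x, d ≤ infDist x A + infDist x B := by
  obtain ⟨δ, hδ, hdisj⟩ :=
    w.disjoint.exists_thickenings w.isCompact_left w.isCompact_right.isClosed
  refine ⟨δ, hδ, fun x => le_of_not_gt fun hx =>
    disjoint_left.1 hdisj (?_ : x ∈ _) ?_⟩
  · exact (mem_thickening_iff_infDist_lt w.nonempty_left).2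
      (by linarith [infDist_nonneg (x := x) (s := B)])
  · exact (mem_thickening_iff_infDist_lt w.nonempty_right).2
      (by linarith [infDist_nonneg (x := x) (s := A)])

theorem exists_le_of_le_infDist [ProperSpace E] (w : TwoWell W A B) {r : ℝ} (hr : 0 < r) :
    ∃ η > 0, ∀ x, r ≤ infDist x A → r ≤ infDist x B → η ≤ W x := by
  obtain ⟨η, hη, hcoer⟩ := w.coercive
  set K := closure {x | ¬ η ≤ W x} ∩ {x | r ≤ infDist x A ∧ r ≤ infDist x B}
  have hbdd : Bornology.IsBounded {x | ¬ η ≤ W x} := by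
    rw [Bornology.isBounded_def]
    exact hcoer.mono fun x => not_not_intro
  have hK : IsCompact K := hbdd.isCompact_closure.inter_right <|
    (isClosed_le continuous_const (continuous_infDist_pt A)).inter
      (isClosed_le continuous_const (continuous_infDist_pt B))
  have hpos : ∀ x ∈ K, 0 < W x := fun x hx => (w.nonneg x).lt_of_ne fun h0 => by
    rcases w.eq_zero_iff.1 h0.symm with h | h
    · exact hr.not_ge (infDist_zero_of_mem h ▸ hx.2.1)
    · exact hr.not_ge (infDist_zero_of_mem h ▸ hx.2.2)
  obtain ⟨η', hη', hle⟩ := hK.exists_forall_le' w.continuous.continuousOn hpos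
  refine ⟨min η η', lt_min hη hη', fun x hA hB => ?_⟩
  by_cases hx : η ≤ W x
  · exact (min_le_left _ _).trans hx
  · exact (min_le_right _ _).trans (hle x ⟨subset_closure hx, hA, hB⟩)

end TwoWell

end Wells

section ActionBounds

variable {E : Type*} [NormedAddCommGroup E] [NormedSpace ℝ E] {W : E → ℝ} {A B : Set E}
  {q u : ℝ → E}

/-- The infimum of the action over the curves connecting `A` to `B`. -/
def minAction (W : E → ℝ) (A B : Set E) : ℝ :=
  sInf {r | ∃ q u, ConnectingCurve W A B q u ∧ action W q u = r}

theorem minAction_le (hW : ∀ x, 0 ≤ W x) (h : ConnectingCurve W A B q u) :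
    minAction W A B ≤ action W q u :=
  csInf_le ⟨0, by rintro _ ⟨q, u, -, rfl⟩; exact integral_nonneg (lagrangian_nonneg hW q u)⟩
    ⟨q, u, h, rfl⟩

theorem minAction_comm (W : E → ℝ) (A B : Set E) : minAction W A B = minAction W B A := by
  have hsub (A B : Set E) : {r | ∃ q u, ConnectingCurve W A B q u ∧ action W q u = r} ⊆
      {r | ∃ q u, ConnectingCurve W B A q u ∧ action W q u = r} := by
    rintro _ ⟨q, u, h, rfl⟩
    exact ⟨_, _, h.reverse, h.action_reverse⟩
  exact congrArg sInf ((hsub A B).antisymm (hsub B A))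

theorem ConnectingCurve.exists_le_infDist {d : ℝ} (h : ConnectingCurve W A B q u) (hd : 0 < d)
    (hsep : ∀ x, d ≤ infDist x A + infDist x B) :
    ∃ t, d / 3 ≤ infDist (q t) A ∧ d / 3 ≤ infDist (q t) B := by
  obtain ⟨t, -, ht⟩ := frequently_atTop.1 (h.frequently_near_right (d / 3) (by positivity)) 0
  obtain ⟨s, hst, hs⟩ := frequently_atBot.1 (h.frequently_near_left (d / 3) (by positivity)) t
  have hcont : Continuous fun t => infDist (q t) A := (continuous_infDist_pt A).comp h.continuous
  obtain ⟨r, -, hr⟩ := intermediate_value_Icc hst hcont.continuousOn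
    (show d / 3 ∈ _ from ⟨hs.le, by linarith [hsep (q t)]⟩)
  exact ⟨r, hr.ge, by linarith [hsep (q r)]⟩

namespace TwoWell

theorem exists_segment_action_lt (w : TwoWell W A B) {κ : ℝ} (hκ : 0 < κ) :
    ∃ r > 0, ∀ x, infDist x A < r →
      ∃ y ∈ A, ∃ b, (∀ z ∈ segment ℝ y x, W z ≤ b) ∧ 2⁻¹ * ‖x - y‖ ^ 2 + b < κ := by
  have hsub : A ⊆ {x | W x < κ / 2} := fun x hx => by
    simpa [w.eq_zero_left hx] using hκ
  obtain ⟨δ, hδ, hthick⟩ := w.isCompact_left.exists_thickening_subset_open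
    (isOpen_lt w.continuous continuous_const) hsub
  refine ⟨min δ √κ, lt_min hδ (Real.sqrt_pos.2 hκ), fun x hx => ?_⟩
  obtain ⟨y, hy, hxy⟩ := (infDist_lt_iff w.nonempty_left).1 hx
  rw [lt_min_iff, Real.lt_sqrt dist_nonneg, dist_eq_norm] at hxy
  refine ⟨y, hy, κ / 2, fun z hz => (hthick ?_).le, by linarith⟩
  have hball : segment ℝ y x ⊆ ball y δ :=
    (convex_ball y δ).segment_subset (mem_ball_self hδ) (by simpa [dist_eq_norm] using hxy.1)
  exact mem_thickening_iff.2 ⟨y, hy, hball hz⟩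

theorem exists_connectingCurve [CompleteSpace E] (w : TwoWell W A B) :
    ∃ q u, ConnectingCurve W A B q u := by
  obtain ⟨x, hx⟩ := w.nonempty_left
  obtain ⟨y, hy⟩ := w.nonempty_right
  have hconst : FiniteAction W (fun _ => y) (fun _ => 0) :=
    ⟨⟨by simp, by simp⟩, by simp [w.symm.eq_zero_left hy]⟩
  have hK : IsCompact (segment ℝ x y) := by
    rw [segment_eq_image']
    exact isCompact_Icc.image (by fun_prop)
  obtain ⟨b, hb⟩ := (hK.image w.continuous).bddAbove
  obtain ⟨q, u, h, -⟩ := exists_connectingCurve_action_le (B := B) w.continuous hconst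
    (fun ε hε => Frequently.of_forall fun _ => by rwa [infDist_zero_of_mem hy]) 0 hx
    (w.eq_zero_left hx) fun z hz => hb (mem_image_of_mem _ hz)
  exact ⟨q, u, h⟩

theorem exists_norm_le_of_action_le (w : TwoWell W A B) (M : ℝ) :
    ∃ R, ∀ q u, ConnectingCurve W A B q u → action W q u ≤ M → ∀ t, ‖q t‖ ≤ R := by
  obtain ⟨η, hη, hcoer⟩ := w.coercive
  obtain ⟨ρ, -, hρ⟩ := hasBasis_cobounded_norm.eventually_iff.1 hcoer
  obtain ⟨ρ', hρ'⟩ := w.isCompact_left.isBounded.exists_norm_le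
  set L := max ρ (ρ' + 1)
  have hsqrt : 0 < √(2 * η) := Real.sqrt_pos.2 (by positivity)
  refine ⟨L + M / √(2 * η), fun q u h hM t => ?_⟩
  have hM0 : 0 ≤ M := (integral_nonneg (lagrangian_nonneg w.nonneg q u)).trans hM
  rcases le_or_gt (‖q t‖) L with hle | hgt
  · exact hle.trans (le_add_of_nonneg_right (by positivity))
  obtain ⟨s, hst, hs⟩ := (frequently_atBot.1 (h.frequently_near_left 1 one_pos)) t
  have hsL : ‖q s‖ ≤ L := by
    obtain ⟨y, hy, hsy⟩ := (infDist_lt_iff w.nonempty_left).1 hs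
    rw [dist_eq_norm] at hsy
    linarith [norm_le_norm_add_norm_sub' (q s) y, hρ' y hy, le_max_right ρ (ρ' + 1)]
  obtain ⟨r, hr, hrL, hge⟩ := exists_last_visit h.continuous.norm hst hsL hgt.le
  have hcost := (h.sqrt_mul_norm_sub_le hr.2 hη.le fun x hx =>
    hρ ((le_max_left _ _).trans (hge x hx))).trans
      ((h.setIntegral_lagrangian_le_action w.nonneg _).trans hM)
  have hdist : ‖q t - q r‖ ≤ M / √(2 * η) := by rwa [le_div_iff₀' hsqrt]
  linarith [norm_le_norm_add_norm_sub' (q t) (q r)]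

variable {d : ℝ}

theorem exists_le_setIntegral_Iic [ProperSpace E] (w : TwoWell W A B) (hd : 0 < d)
    (hsep : ∀ x, d ≤ infDist x A + infDist x B) :
    ∃ k > 0, ∀ q u, ConnectingCurve W A B q u → ∀ t, d / 3 ≤ infDist (q t) A →
      k ≤ ∫ s in Iic t, lagrangian W q u s := by
  obtain ⟨η, hη, hW⟩ := w.exists_le_of_le_infDist (r := d / 6) (by positivity)
  refine ⟨√(2 * η) * (d / 6), by positivity, fun q u h t ht => ?_⟩
  obtain ⟨s, hst, hs⟩ := frequently_atBot.1 (h.frequently_near_left (d / 6) (by positivity)) t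
  obtain ⟨s', t', hst', ht't, hs', ht', hmem⟩ := exists_crossing
    (f := fun t => infDist (q t) A) (a := d / 6) ((continuous_infDist_pt A).comp h.continuous)
    hst (by linarith) hs.le ht
  have hdist : d / 6 ≤ ‖q t' - q s'‖ := by
    have := infDist_le_infDist_add_dist (s := A) (x := q t') (y := q s')
    rw [dist_eq_norm] at this
    linarith
  calc √(2 * η) * (d / 6) ≤ √(2 * η) * ‖q t' - q s'‖ := by gcongr
    _ ≤ ∫ r in Ioc s' t', lagrangian W q u r :=
        h.sqrt_mul_norm_sub_le hst' hη.le fun r hr =>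
          hW _ (hmem r hr).1 (by linarith [(hmem r hr).2, hsep (q r)])
    _ ≤ ∫ r in Iic t, lagrangian W q u r :=
        h.setIntegral_lagrangian_mono w.nonneg fun r hr => hr.2.trans ht't

/-- If the curve returned to `A`, then restarting it there would save the cost of its first
departure. -/
theorem exists_confinement [ProperSpace E] (w : TwoWell W A B) (hd : 0 < d)
    (hsep : ∀ x, d ≤ infDist x A + infDist x B) :
    ∃ κ > 0, ∃ r > 0, ∀ q u, ConnectingCurve W A B q u → action W q u < minAction W A B + κ →
      d / 3 ≤ infDist (q 0) A → ∀ t ≥ 0, r ≤ infDist (q t) A := by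
  obtain ⟨k, hk, hcost⟩ := w.exists_le_setIntegral_Iic hd hsep
  obtain ⟨r, hr, hnear⟩ := w.exists_segment_action_lt (half_pos hk)
  refine ⟨k / 2, half_pos hk, r, hr, fun q u h hlt h0 t ht => le_of_not_gt fun htr => ?_⟩
  obtain ⟨y, hy, b, hb, hyb⟩ := hnear _ htr
  obtain ⟨q', u', h', hle⟩ := exists_connectingCurve_action_le w.continuous h.toFiniteAction
    h.frequently_near_right t hy (w.eq_zero_left hy) hb
  have hmin := minAction_le w.nonneg h'
  have hstart := (hcost q u h 0 h0).trans
    (h.setIntegral_lagrangian_mono w.nonneg (Iic_subset_Iic.2 ht))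
  have hsplit : _ = action W q u := intervalIntegral.integral_Iic_add_Ioi (b := t)
    h.integrable_lagrangian.integrableOn h.integrable_lagrangian.integrableOn
  linarith

end TwoWell

end ActionBounds

section Fatou

variable {α : Type*} [MeasurableSpace α] {μ : Measure α}

theorem integrable_and_integral_le_of_tendsto {f : ℕ → α → ℝ} {g : α → ℝ} {b : ℕ → ℝ} {c : ℝ}
    (hf : ∀ n, Integrable (f n) μ) (hf0 : ∀ n x, 0 ≤ f n x)
    (hlim : ∀ x, Tendsto (fun n => f n x) atTop (𝓝 (g x))) (hb : ∀ n, ∫ x, f n x ∂μ ≤ b n)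
    (hbc : Tendsto b atTop (𝓝 c)) : Integrable g μ ∧ ∫ x, g x ∂μ ≤ c := by
  have hg0 : ∀ x, 0 ≤ g x := fun x => ge_of_tendsto' (hlim x) fun n => hf0 n x
  have hc : 0 ≤ c := ge_of_tendsto' hbc fun n => (integral_nonneg (hf0 n)).trans (hb n)
  have hgm : AEStronglyMeasurable g μ :=
    aestronglyMeasurable_of_tendsto_ae atTop (fun n => (hf n).1) (Eventually.of_forall hlim)
  have hle : ∫⁻ x, ENNReal.ofReal (g x) ∂μ ≤ ENNReal.ofReal c :=
    calc ∫⁻ x, ENNReal.ofReal (g x) ∂μ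
        = ∫⁻ x, liminf (fun n => ENNReal.ofReal (f n x)) atTop ∂μ := by
          simp_rw [fun x => (ENNReal.tendsto_ofReal (hlim x)).liminf_eq]
      _ ≤ liminf (fun n => ∫⁻ x, ENNReal.ofReal (f n x) ∂μ) atTop :=
          lintegral_liminf_le' fun n => (hf n).1.aemeasurable.ennreal_ofReal
      _ ≤ liminf (fun n => ENNReal.ofReal (b n)) atTop := by
          refine liminf_le_liminf (Eventually.of_forall fun n => ?_)
          rw [← ofReal_integral_eq_lintegral_ofReal (hf n) (Eventually.of_forall (hf0 n))]
          exact ENNReal.ofReal_le_ofReal (hb n)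
      _ = ENNReal.ofReal c := (ENNReal.tendsto_ofReal hbc).liminf_eq
  refine ⟨⟨hgm, ?_⟩, ?_⟩
  · rw [hasFiniteIntegral_iff_ofReal (Eventually.of_forall hg0)]
    exact hle.trans_lt ENNReal.ofReal_lt_top
  · rw [integral_eq_lintegral_of_nonneg_ae (Eventually.of_forall hg0) hgm]
    exact ENNReal.toReal_le_of_le_ofReal hc hle

theorem frequently_atTop_lt_of_integrable {f : ℝ → ℝ} (hf : Integrable f) {η : ℝ} (hη : 0 < η) :
    ∃ᶠ t in atTop, f t < η := by
  intro hne
  obtain ⟨T, hT⟩ := eventually_atTop.1 hne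
  have hconst : IntegrableOn (fun _ : ℝ => η) (Ici T) := by
    refine hf.integrableOn.mono' aestronglyMeasurable_const ?_
    filter_upwards [ae_restrict_mem measurableSet_Ici] with t ht
    rw [Real.norm_of_nonneg hη.le]
    exact not_lt.1 (hT t ht)
  have h := (integrableOn_const_iff (by simp)).1 hconst
  simp [hη.ne'] at h

theorem frequently_atBot_lt_of_integrable {f : ℝ → ℝ} (hf : Integrable f) {η : ℝ} (hη : 0 < η) :
    ∃ᶠ t in atBot, f t < η :=
  tendsto_neg_atTop_atBot.frequently (frequently_atTop_lt_of_integrable hf.comp_neg hη)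

end Fatou

section WeakCompactness

theorem exists_subseq_tendsto_inner {H : Type*} [NormedAddCommGroup H] [InnerProductSpace ℝ H]
    [CompleteSpace H] [TopologicalSpace.SeparableSpace H] {U : ℕ → H} {C : ℝ}
    (hU : ∀ n, ‖U n‖ ≤ C) :
    ∃ (V : H) (φ : ℕ → ℕ), StrictMono φ ∧
      ∀ g, Tendsto (fun n => inner ℝ (U (φ n)) g) atTop (𝓝 (inner ℝ V g)) := by
  obtain ⟨a, -, φ, hφ, ha⟩ := WeakDual.isSeqCompact_closedBall ℝ H 0 C
    (x := fun n => StrongDual.toWeakDual (InnerProductSpace.toDual ℝ H (U n)))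
    fun n => mem_closedBall_zero_iff.2
      (((InnerProductSpace.toDual ℝ H).norm_map (U n)).trans_le (hU n))
  refine ⟨(InnerProductSpace.toDual ℝ H).symm (WeakDual.toStrongDual a), φ, hφ, fun g => ?_⟩
  rw [InnerProductSpace.toDual_symm_apply]
  exact (WeakDual.eval_continuous g).continuousAt.tendsto.comp ha

variable {E : Type*} [NormedAddCommGroup E] [InnerProductSpace ℝ E]

theorem integrable_inner_of_memLp_two {u v : ℝ → E} (hu : MemLp u 2 volume)
    (hv : MemLp v 2 volume) : Integrable (fun t => inner ℝ (u t) (v t)) :=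
  (L2.integrable_inner (hu.toLp u) (hv.toLp v)).congr <| by
    filter_upwards [hu.coeFn_toLp, hv.coeFn_toLp] with t hut hvt
    simp only [hut, hvt]

/-- Weak lower semicontinuity: the kinetic part comes from `½|uₙ|² ≥ ⟪uₙ, v⟫ - ½|v|²`, the
potential part from Fatou's lemma. -/
theorem FiniteAction.of_tendsto {W : E → ℝ} (hW : Continuous W) (hW0 : ∀ x, 0 ≤ W x)
    {q u : ℕ → ℝ → E} (h : ∀ n, FiniteAction W (q n) (u n)) {p v : ℝ → E} (hp : HasL2Deriv p v)
    (hlim : ∀ t, Tendsto (fun n => q n t) atTop (𝓝 (p t)))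
    (hinner : Tendsto (fun n => ∫ t, inner ℝ (u n t) (v t)) atTop (𝓝 (∫ t, ‖v t‖ ^ 2)))
    {m : ℝ} (hm : Tendsto (fun n => action W (q n) (u n)) atTop (𝓝 m)) :
    FiniteAction W p v ∧ action W p v ≤ m := by
  have hkin (n : ℕ) : (∫ t, inner ℝ (u n t) (v t)) - 2⁻¹ * ∫ t, ‖v t‖ ^ 2 ≤
      2⁻¹ * ∫ t, ‖u n t‖ ^ 2 := by
    have hu := (h n).integrable_norm_sq
    have hv := hp.integrable_norm_sq
    rw [← integral_const_mul, ← integral_const_mul,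
      ← integral_sub (integrable_inner_of_memLp_two (h n).memLp hp.memLp) (hv.const_mul _)]
    refine integral_mono ((integrable_inner_of_memLp_two (h n).memLp hp.memLp).sub
      (hv.const_mul _)) (hu.const_mul _) fun t => ?_
    have := norm_sub_sq_real (u n t) (v t)
    linarith [sq_nonneg ‖u n t - v t‖]
  obtain ⟨hint, hle⟩ := integrable_and_integral_le_of_tendsto
    (fun n => (h n).integrable_potential) (fun n t => hW0 _)
    (fun t => (hW.tendsto _).comp (hlim t))
    (b := fun n => action W (q n) (u n) -
      ((∫ t, inner ℝ (u n t) (v t)) - 2⁻¹ * ∫ t, ‖v t‖ ^ 2))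
    (fun n => by linarith [hkin n, (h n).action_eq]) (hm.sub (hinner.sub_const _))
  have hfin : FiniteAction W p v := ⟨hp, hint⟩
  exact ⟨hfin, by linarith [hfin.action_eq]⟩

variable [FiniteDimensional ℝ E]

theorem tendsto_of_forall_tendsto_inner {ι : Type*} {l : Filter ι} {x : ι → E} {y : E}
    (h : ∀ e, Tendsto (fun n => inner ℝ e (x n)) l (𝓝 (inner ℝ e y))) : Tendsto x l (𝓝 y) := by
  set b := stdOrthonormalBasis ℝ E
  rw [← b.sum_repr' y]
  exact (tendsto_finsetSum _ fun i _ => (h (b i)).smul_const (b i)).congr fun n =>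
    b.sum_repr' (x n)

theorem exists_subseq_tendsto_integral_inner {u : ℕ → ℝ → E} (hu : ∀ n, MemLp (u n) 2 volume)
    {C : ℝ} (hC : ∀ n, ∫ t, ‖u n t‖ ^ 2 ≤ C) :
    ∃ (v : ℝ → E) (φ : ℕ → ℕ), MemLp v 2 volume ∧ StrictMono φ ∧
      (∀ a b : ℝ, Tendsto (fun n => ∫ t in a..b, u (φ n) t) atTop (𝓝 (∫ t in a..b, v t))) ∧
      Tendsto (fun n => ∫ t, inner ℝ (u (φ n) t) (v t)) atTop (𝓝 (∫ t, ‖v t‖ ^ 2)) := by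
  have : Fact ((2 : ℝ≥0∞) ≠ ∞) := ⟨by norm_num⟩
  set U : ℕ → Lp E 2 (volume : Measure ℝ) := fun n => (hu n).toLp (u n)
  have hUu (n : ℕ) : U n =ᵐ[volume] u n := (hu n).coeFn_toLp
  have hU (n : ℕ) : ‖U n‖ ≤ √C := by
    refine Real.le_sqrt_of_sq_le (le_trans (le_of_eq ?_) (hC n))
    rw [← real_inner_self_eq_norm_sq, L2.inner_def]
    refine integral_congr_ae ((hUu n).mono fun t ht => ?_)
    simp only [ht, real_inner_self_eq_norm_sq]
  obtain ⟨V, φ, hφ, hV⟩ := exists_subseq_tendsto_inner hU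
  have hIoc (a b : ℝ) : Tendsto (fun n => ∫ t in Ioc a b, u (φ n) t) atTop
      (𝓝 (∫ t in Ioc a b, V t)) := by
    refine tendsto_of_forall_tendsto_inner fun e => ?_
    have hind (f : Lp E 2 (volume : Measure ℝ)) :
        inner ℝ f (indicatorConstLp 2 (measurableSet_Ioc (a := a) (b := b)) (by simp) e) =
          inner ℝ e (∫ t in Ioc a b, f t) := by
      rw [real_inner_comm, L2.inner_indicatorConstLp_eq_inner_setIntegral]
    have h := hV (indicatorConstLp 2 (measurableSet_Ioc (a := a) (b := b)) (by simp) e)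
    simp only [hind] at h
    refine h.congr fun n => ?_
    rw [integral_congr_ae (ae_restrict_of_ae (hUu (φ n)))]
  refine ⟨V, φ, Lp.memLp V, hφ, fun a b => (hIoc a b).sub (hIoc b a), ?_⟩
  have h := hV V
  simp only [L2.inner_def, real_inner_self_eq_norm_sq] at h
  refine h.congr fun n => integral_congr_ae ((hUu (φ n)).mono fun t ht => ?_)
  simp only [ht]

theorem HasL2Deriv.exists_subseq_tendsto {q u : ℕ → ℝ → E} (h : ∀ n, HasL2Deriv (q n) (u n))
    {R C : ℝ} (hR : ∀ n, ‖q n 0‖ ≤ R) (hC : ∀ n, ∫ t, ‖u n t‖ ^ 2 ≤ C) :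
    ∃ (p v : ℝ → E) (φ : ℕ → ℕ), HasL2Deriv p v ∧ StrictMono φ ∧
      (∀ t, Tendsto (fun n => q (φ n) t) atTop (𝓝 (p t))) ∧
      Tendsto (fun n => ∫ t, inner ℝ (u (φ n) t) (v t)) atTop (𝓝 (∫ t, ‖v t‖ ^ 2)) := by
  obtain ⟨v, φ, hv, hφ, hint, hinner⟩ :=
    exists_subseq_tendsto_integral_inner (fun n => (h n).memLp) hC
  obtain ⟨x, -, ψ, hψ, hx⟩ := (isCompact_closedBall (0 : E) R).tendsto_subseq
    (x := fun n => q (φ n) 0) fun n => mem_closedBall_zero_iff.2 (hR _)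
  refine ⟨fun t => x + ∫ s in 0..t, v s, v, φ ∘ ψ, .of_eq_add_integral hv 0 fun t => by simp,
    hφ.comp hψ, fun t => ?_, hinner.comp hψ.tendsto_atTop⟩
  simp_rw [fun n => (h n).eq_add_integral 0 t]
  exact hx.add ((hint 0 t).comp hψ.tendsto_atTop)

end WeakCompactness

section Minimizers

variable {E : Type*} [NormedAddCommGroup E] [NormedSpace ℝ E] {W : E → ℝ} {A B : Set E}
  {q u : ℝ → E}

/-- Connecting curves of least action. -/
structure IsActionMinimizer (W : E → ℝ) (A B : Set E) (q u : ℝ → E) : Prop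
    extends ConnectingCurve W A B q u where
  action_le : ∀ q' u', ConnectingCurve W A B q' u' → action W q u ≤ action W q' u'

theorem IsActionMinimizer.reverse (h : IsActionMinimizer W A B q u) :
    IsActionMinimizer W B A (fun t => q (-t)) (fun t => -u (-t)) where
  toConnectingCurve := h.toConnectingCurve.reverse
  action_le q' u' h' := by
    rw [h.action_reverse, ← h'.action_reverse]
    exact h.action_le _ _ h'.reverse

end Minimizers

section Existence

variable {E : Type*} [NormedAddCommGroup E] [InnerProductSpace ℝ E] [FiniteDimensional ℝ E]
  {W : E → ℝ} {A B : Set E} {q u : ℝ → E}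

namespace TwoWell

theorem exists_confined_connectingCurve (w : TwoWell W A B) :
    ∃ r > 0, ∃ R, ∀ ε > 0, ∃ q u, ConnectingCurve W A B q u ∧
      action W q u < minAction W A B + ε ∧ ‖q 0‖ ≤ R ∧
      (∀ t ≤ 0, r ≤ infDist (q t) B) ∧ ∀ t ≥ 0, r ≤ infDist (q t) A := by
  obtain ⟨d, hd, hsep⟩ := w.exists_le_infDist_add_infDist
  have hsep' (x : E) : d ≤ infDist x B + infDist x A := by linarith [hsep x]
  obtain ⟨κ, hκ, r, hr, hconf⟩ := w.exists_confinement hd hsep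
  obtain ⟨κ', hκ', r', hr', hconf'⟩ := w.symm.exists_confinement hd hsep'
  obtain ⟨R, hR⟩ := w.exists_norm_le_of_action_le (minAction W A B + κ)
  refine ⟨min r r', lt_min hr hr', R, fun ε hε => ?_⟩
  obtain ⟨q₀, u₀, h₀⟩ := w.exists_connectingCurve
  obtain ⟨_, ⟨q, u, h, rfl⟩, hlt⟩ := Real.lt_sInf_add_pos
    (s := {r | ∃ q u, ConnectingCurve W A B q u ∧ action W q u = r}) ⟨_, q₀, u₀, h₀, rfl⟩
    (lt_min hε (lt_min hκ hκ'))
  obtain ⟨hltε, hltκ, hltκ'⟩ : action W q u < minAction W A B + ε ∧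
      action W q u < minAction W A B + κ ∧ action W q u < minAction W A B + κ' := by
    simpa only [← min_add_add_left, lt_min_iff, minAction] using hlt
  obtain ⟨k, hkA, hkB⟩ := h.exists_le_infDist hd hsep
  have hk := h.translate k
  rw [← h.action_translate k] at hltε hltκ hltκ'
  refine ⟨_, _, hk, hltε, hR _ _ hk hltκ.le 0, fun t ht => ?_, fun t ht =>
    (min_le_left r r').trans (hconf _ _ hk hltκ (by simpa using hkA) t ht)⟩
  refine (min_le_right r r').trans ?_
  simpa using hconf' _ _ hk.reverse (by rwa [hk.action_reverse, minAction_comm])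
    (by simpa using hkB) (-t) (neg_nonneg.2 ht)

theorem connectingCurve_of_confined (w : TwoWell W A B) (h : FiniteAction W q u) {r : ℝ}
    (hr : 0 < r) (hB : ∀ t ≤ 0, r ≤ infDist (q t) B) (hA : ∀ t ≥ 0, r ≤ infDist (q t) A) :
    ConnectingCurve W A B q u where
  toFiniteAction := h
  frequently_near_left ε hε := by
    obtain ⟨η, hη, hle⟩ := w.exists_le_of_le_infDist (lt_min hε hr)
    refine ((frequently_atBot_lt_of_integrable h.integrable_potential hη).and_eventually
      (eventually_le_atBot 0)).mono fun t ⟨hlt, ht⟩ => not_le.1 fun hge => hlt.not_ge ?_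
    exact hle _ ((min_le_left ε r).trans hge) ((min_le_right ε r).trans (hB t ht))
  frequently_near_right ε hε := by
    obtain ⟨η, hη, hle⟩ := w.exists_le_of_le_infDist (lt_min hε hr)
    refine ((frequently_atTop_lt_of_integrable h.integrable_potential hη).and_eventually
      (eventually_ge_atTop 0)).mono fun t ⟨hlt, ht⟩ => not_le.1 fun hge => hlt.not_ge ?_
    exact hle _ ((min_le_right ε r).trans (hA t ht)) ((min_le_left ε r).trans hge)

theorem exists_isActionMinimizer (w : TwoWell W A B) :
    ∃ q u, IsActionMinimizer W A B q u ∧ (∀ t ≤ 0, q t ∉ B) ∧ ∀ t ≥ 0, q t ∉ A := by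
  obtain ⟨r, hr, R, hseq⟩ := w.exists_confined_connectingCurve
  choose q u hqu hlt hR hB hA using fun n : ℕ => hseq (1 / ((n : ℝ) + 1)) Nat.one_div_pos_of_nat
  have hge (n : ℕ) : minAction W A B ≤ action W (q n) (u n) := minAction_le w.nonneg (hqu n)
  have haction : Tendsto (fun n => action W (q n) (u n)) atTop (𝓝 (minAction W A B)) := by
    refine tendsto_of_tendsto_of_tendsto_of_le_of_le tendsto_const_nhds ?_ hge fun n => (hlt n).le
    simpa using tendsto_one_div_add_atTop_nhds_zero_nat.const_add (minAction W A B)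
  have hkin (n : ℕ) : ∫ t, ‖u n t‖ ^ 2 ≤ 2 * (minAction W A B + 1) := by
    have hpot : 0 ≤ ∫ t, W (q n t) := integral_nonneg fun t => w.nonneg _
    have hn : 1 / ((n : ℝ) + 1) ≤ 1 := by
      rw [div_le_one (by positivity)]
      linarith [n.cast_nonneg (α := ℝ)]
    linarith [(hqu n).action_eq, hlt n]
  obtain ⟨p, v, φ, hp, hφ, hlim, hinner⟩ :=
    HasL2Deriv.exists_subseq_tendsto (fun n => (hqu n).toHasL2Deriv) hR hkin
  obtain ⟨hfin, hle⟩ := FiniteAction.of_tendsto w.continuous w.nonneg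
    (fun n => (hqu (φ n)).toFiniteAction) hp hlim hinner (haction.comp hφ.tendsto_atTop)
  have hlimDist (s : Set E) (t : ℝ) : Tendsto (fun n => infDist (q (φ n) t) s) atTop
      (𝓝 (infDist (p t) s)) := ((continuous_infDist_pt s).tendsto _).comp (hlim t)
  have hpB (t : ℝ) (ht : t ≤ 0) : r ≤ infDist (p t) B := ge_of_tendsto' (hlimDist B t)
    fun n => hB _ t ht
  have hpA (t : ℝ) (ht : t ≥ 0) : r ≤ infDist (p t) A := ge_of_tendsto' (hlimDist A t)
    fun n => hA _ t ht
  refine ⟨p, v, ⟨w.connectingCurve_of_confined hfin hr hpB hpA, fun q' u' h' =>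
    hle.trans (minAction_le w.nonneg h')⟩, fun t ht hmem => ?_, fun t ht hmem => ?_⟩
  · exact (hr.trans_le (hpB t ht)).ne' (infDist_zero_of_mem hmem)
  · exact (hr.trans_le (hpA t ht)).ne' (infDist_zero_of_mem hmem)

end TwoWell

end Existence

section DuBoisReymond

variable {E : Type*} [NormedAddCommGroup E] [NormedSpace ℝ E]

theorem contDiff_one_primitive [CompleteSpace E] {g : ℝ → E} (hg : Continuous g) (a : ℝ) :
    ContDiff ℝ 1 (fun t => ∫ s in a..t, g s) :=
  contDiff_one_iff_deriv.2
    ⟨fun t => (hg.integral_hasStrictDerivAt a t).hasDerivAt.differentiableAt,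
      hg.congr fun t => (hg.deriv_integral g a t).symm⟩

theorem tsupport_primitive_subset {g : ℝ → E} {a b : ℝ} (hg : Continuous g)
    (hsupp : tsupport g ⊆ Icc a b) (h0 : ∫ t, g t = 0) :
    tsupport (fun t => ∫ s in a..t, g s) ⊆ Icc a b := by
  have hIoo : Function.support g ⊆ Ioo a b := by
    rw [← interior_Icc]
    exact interior_maximal ((subset_tsupport g).trans hsupp) hg.isOpen_support
  refine closure_minimal (fun t ht => ?_) isClosed_Icc
  by_contra hmem
  refine ht ?_
  rcases lt_or_ge t a with hta | hat
  · refine (intervalIntegral.integral_congr fun s hs => ?_).trans intervalIntegral.integral_zero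
    rw [uIcc_of_ge hta.le] at hs
    exact Function.notMem_support.1 fun hs' => (hIoo hs').1.not_ge hs.2
  · have hbt : b ≤ t := le_of_not_ge fun htb => hmem ⟨hat, htb⟩
    change ∫ s in a..t, g s = 0
    rw [intervalIntegral.integral_eq_integral_of_support_subset, h0]
    exact fun s hs => ⟨(hIoo hs).1, ((hIoo hs).2.trans_le hbt).le⟩

theorem exists_continuous_tsupport_subset_integral_eq_one {a b : ℝ} (hab : a < b) :
    ∃ η : ℝ → ℝ, Continuous η ∧ tsupport η ⊆ Icc a b ∧ ∫ t, η t = 1 := by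
  let η : ContDiffBump ((a + b) / 2) := ⟨(b - a) / 4, (b - a) / 2, by linarith, by linarith⟩
  refine ⟨η.normed volume, (η.contDiff_normed (n := 0)).continuous, ?_, η.integral_normed⟩
  rw [η.tsupport_normed_eq, Real.closedBall_eq_Icc]
  exact Icc_subset_Icc (by simp only [η]; linarith) (by simp only [η]; linarith)

variable [CompleteSpace E] {f g : ℝ → E} {a b : ℝ}

/-- The du Bois-Reymond lemma. -/
theorem exists_ae_eq_const_of_integral_deriv_smul_eq_zero (hf : LocallyIntegrable f) (hab : a < b)
    (h : ∀ ψ : ℝ → ℝ, ContDiff ℝ 1 ψ → tsupport ψ ⊆ Icc a b → ∫ t, deriv ψ t • f t = 0) :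
    ∃ C, ∀ᵐ t, t ∈ Ioo a b → f t = C := by
  have hcompact {χ : ℝ → ℝ} (hs : tsupport χ ⊆ Icc a b) : HasCompactSupport χ :=
    isCompact_Icc.of_isClosed_subset (isClosed_tsupport χ) hs
  have hmean {χ : ℝ → ℝ} (hχ : Continuous χ) (hs : tsupport χ ⊆ Icc a b) (h0 : ∫ t, χ t = 0) :
      ∫ t, χ t • f t = 0 := by
    simpa only [hχ.deriv_integral] using
      h _ (contDiff_one_primitive hχ a) (tsupport_primitive_subset hχ hs h0)
  obtain ⟨η, hη, hηs, hη1⟩ := exists_continuous_tsupport_subset_integral_eq_one hab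
  refine ⟨∫ t, η t • f t, ?_⟩
  suffices hae : ∀ᵐ t, t ∈ Ioo a b → f t - ∫ s, η s • f s = 0 from
    hae.mono fun t ht hmem => sub_eq_zero.1 (ht hmem)
  refine isOpen_Ioo.ae_eq_zero_of_integral_contDiff_smul_eq_zero
    ((hf.sub (locallyIntegrable_const _)).locallyIntegrableOn _) fun χ hχ hχc hχs => ?_
  have hχi : Integrable χ := hχ.continuous.integrable_of_hasCompactSupport hχc
  have hηi : Integrable η := hη.integrable_of_hasCompactSupport (hcompact hηs)
  have hχf := hf.integrable_smul_left_of_hasCompactSupport hχ.continuous hχc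
  have hηf := hf.integrable_smul_left_of_hasCompactSupport hη (hcompact hηs)
  have h0 := hmean (χ := fun t => χ t - (∫ s, χ s) * η t)
    (hχ.continuous.sub (continuous_const.mul hη))
    ((tsupport_sub _ _).trans (union_subset (hχs.trans Ioo_subset_Icc_self)
      ((tsupport_mul_subset_right).trans hηs)))
    (by rw [integral_sub hχi (hηi.const_mul _), integral_const_mul, hη1, mul_one, sub_self])
  simp only [sub_smul, mul_smul] at h0
  rw [integral_sub hχf (Integrable.fun_smul _ hηf), integral_smul, ← integral_smul_const] at h0
  simp only [smul_sub]
  rw [integral_sub hχf (hχi.smul_const _)]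
  exact h0

theorem exists_ae_eq_add_primitive (hf : LocallyIntegrable f) (hg : Continuous g) (hab : a < b)
    (h : ∀ ψ : ℝ → ℝ, ContDiff ℝ 1 ψ → tsupport ψ ⊆ Icc a b →
      (∫ t, deriv ψ t • f t) + ∫ t, ψ t • g t = 0) :
    ∃ C, ∀ᵐ t, t ∈ Ioo a b → f t = C + ∫ s in a..t, g s := by
  have hG : Continuous fun t => ∫ s in a..t, g s := (contDiff_one_primitive hg a).continuous
  suffices h0 : ∀ ψ : ℝ → ℝ, ContDiff ℝ 1 ψ → tsupport ψ ⊆ Icc a b →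
      ∫ t, deriv ψ t • (f t - ∫ s in a..t, g s) = 0 by
    obtain ⟨C, hC⟩ := exists_ae_eq_const_of_integral_deriv_smul_eq_zero
      (hf.sub hG.locallyIntegrable) hab h0
    exact ⟨C, hC.mono fun t ht hmem => eq_add_of_sub_eq (ht hmem)⟩
  intro ψ hψ hs
  have hψc : HasCompactSupport ψ := isCompact_Icc.of_isClosed_subset (isClosed_tsupport ψ) hs
  have hψ' : Continuous (deriv ψ) := hψ.continuous_deriv le_rfl
  have integrable_smul {χ : ℝ → ℝ} (hχ : Continuous χ) (hχc : HasCompactSupport χ) {k : ℝ → E}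
      (hk : Continuous k) : Integrable fun t => χ t • k t :=
    hk.locallyIntegrable.integrable_smul_left_of_hasCompactSupport hχ hχc
  have hparts : ∫ t, ψ t • g t = -∫ t, deriv ψ t • ∫ s in a..t, g s :=
    integral_bilinear_hasDerivAt_right_eq_neg_left_of_integrable
      (L := ContinuousLinearMap.lsmul ℝ ℝ) (fun t _ => (hψ.differentiable one_ne_zero t).hasDerivAt)
      (fun t _ => (hg.integral_hasStrictDerivAt a t).hasDerivAt)
      (integrable_smul hψ.continuous hψc hg) (integrable_smul hψ' hψc.deriv hG)
      (integrable_smul hψ.continuous hψc hG)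
  simp only [smul_sub]
  rw [integral_sub (hf.integrable_smul_left_of_hasCompactSupport hψ' hψc.deriv)
    (integrable_smul hψ' hψc.deriv hG), sub_eq_add_neg, ← hparts]
  exact h ψ hψ hs

end DuBoisReymond

section FirstVariation

variable {E : Type*} [NormedAddCommGroup E] [InnerProductSpace ℝ E]

theorem hasDerivAt_integral_norm_sq_add_smul {u v : ℝ → E} (hu : MemLp u 2 volume)
    (hv : MemLp v 2 volume) :
    HasDerivAt (fun ε : ℝ => ∫ t, ‖u t + ε • v t‖ ^ 2) (2 * ∫ t, inner ℝ (u t) (v t)) 0 := by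
  have hu2 : Integrable fun t => ‖u t‖ ^ 2 := (memLp_two_iff_integrable_sq_norm hu.1).1 hu
  have hv2 : Integrable fun t => ‖v t‖ ^ 2 := (memLp_two_iff_integrable_sq_norm hv.1).1 hv
  have huv := integrable_inner_of_memLp_two hu hv
  have hexp (ε : ℝ) : ∫ t, ‖u t + ε • v t‖ ^ 2 =
      (∫ t, ‖u t‖ ^ 2) + ε * (2 * ∫ t, inner ℝ (u t) (v t)) + ε ^ 2 * ∫ t, ‖v t‖ ^ 2 := by
    have hpt (t : ℝ) : ‖u t + ε • v t‖ ^ 2 =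
        ‖u t‖ ^ 2 + ε * (2 * inner ℝ (u t) (v t)) + ε ^ 2 * ‖v t‖ ^ 2 := by
      rw [norm_add_sq_real, inner_smul_right, norm_smul, mul_pow, Real.norm_eq_abs, sq_abs]
      ring
    have hcross := (huv.const_mul 2).const_mul ε
    simp only [hpt]
    rw [integral_add (hu2.fun_add hcross) (hv2.const_mul _), integral_add hu2 hcross,
      integral_const_mul, integral_const_mul, integral_const_mul]
  simp only [hexp]
  have hlin := (hasDerivAt_id (0 : ℝ)).mul_const (2 * ∫ t, inner ℝ (u t) (v t))
  have hsq := ((hasDerivAt_id (0 : ℝ)).fun_pow 2).mul_const (∫ t, ‖v t‖ ^ 2)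
  simpa using (hlin.const_add (∫ t, ‖u t‖ ^ 2)).fun_add hsq

variable [CompleteSpace E]

theorem hasDerivAt_comp_of_hasGradientAt {f : E → ℝ} {f' p' : E} {p : ℝ → E} {t : ℝ}
    (hf : HasGradientAt f f' (p t)) (hp : HasDerivAt p p' t) :
    HasDerivAt (fun s => f (p s)) (inner ℝ f' p') t := by
  simpa only [InnerProductSpace.toDual_apply_apply, Function.comp_def] using
    hf.hasFDerivAt.comp_hasDerivAt t hp

theorem continuous_gradient {U : E → ℝ} (hU : ContDiff ℝ 1 U) : Continuous (gradient U) :=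
  (InnerProductSpace.toDual ℝ E).symm.continuous.comp (hU.continuous_fderiv one_ne_zero)

variable {W U : E → ℝ} {Ω : Set E} {q u φ : ℝ → E}

theorem hasDerivAt_integral_comp_add_smul (hW : Continuous W) (hU : ContDiff ℝ 1 U)
    (hΩ : IsOpen Ω) (hWU : EqOn W U Ω) (hq : Continuous q) (hWq : Integrable fun t => W (q t))
    (hφ : Continuous φ) (hφc : HasCompactSupport φ) (hqΩ : ∀ t ∈ tsupport φ, q t ∈ Ω) :
    HasDerivAt (fun ε : ℝ => ∫ t, W (q t + ε • φ t)) (∫ t, inner ℝ (gradient U (q t)) (φ t)) 0 := by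
  have hcurve : Continuous fun z : ℝ × ℝ => q z.2 + z.1 • φ z.2 := by fun_prop
  have hvar : Continuous fun z : ℝ × ℝ => inner ℝ (gradient U (q z.2 + z.1 • φ z.2)) (φ z.2) :=
    ((continuous_gradient hU).comp hcurve).inner (hφ.comp continuous_snd)
  obtain ⟨M, hM⟩ := ((isCompact_Icc (a := (-1 : ℝ)) (b := 1)).prod
    hφc).exists_bound_of_continuousOn hvar.continuousOn
  have hstay : ∀ᶠ ε : ℝ in 𝓝 0, ∀ t ∈ tsupport φ, q t + ε • φ t ∈ Ω := by
    refine IsCompact.eventually_forall_of_forall_eventually hφc fun t ht => ?_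
    exact hcurve.continuousAt.eventually (hΩ.mem_nhds (by simpa using hqΩ t ht))
  have h := (hasDerivAt_integral_of_dominated_loc_of_deriv_le (μ := volume)
    (F := fun (ε : ℝ) t => W (q t + ε • φ t))
    (F' := fun ε t => inner ℝ (gradient U (q t + ε • φ t)) (φ t))
    (bound := (tsupport φ).indicator fun _ => M)
    (inter_mem hstay (Icc_mem_nhds neg_one_lt_zero one_pos))
    (Eventually.of_forall fun ε => (hW.comp (by fun_prop)).aestronglyMeasurable)
    (by simpa using hWq)
    (hvar.comp (continuous_const.prodMk continuous_id)).aestronglyMeasurable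
    (Eventually.of_forall fun t ε hε => ?_)
    ((integrableOn_const hφc.measure_ne_top).integrable_indicator
      (isClosed_tsupport φ).measurableSet)
    (Eventually.of_forall fun t ε hε => ?_)).2
  · simpa only [zero_smul, add_zero] using h
  · by_cases ht : t ∈ tsupport φ
    · rw [indicator_of_mem ht]
      exact hM (ε, t) ⟨hε.2, ht⟩
    · simp [image_eq_zero_of_notMem_tsupport ht, ht]
  · by_cases ht : t ∈ tsupport φ
    · have hmem := hε.1 t ht
      refine hasDerivAt_comp_of_hasGradientAt ?_
        (by simpa using ((hasDerivAt_id ε).smul_const (φ t)).const_add (q t))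
      exact ((hU.differentiable one_ne_zero _).hasGradientAt.congr_of_eventuallyEq
        (hWU.eventuallyEq_of_mem (hΩ.mem_nhds hmem)))
    · simpa [image_eq_zero_of_notMem_tsupport ht] using hasDerivAt_const ε (W (q t))

end FirstVariation

section EulerLagrange

section

variable {E : Type*} [NormedAddCommGroup E] [NormedSpace ℝ E] {W : E → ℝ} {A B : Set E}
  {q u φ : ℝ → E}

theorem ConnectingCurve.add_of_hasCompactSupport [CompleteSpace E] (h : ConnectingCurve W A B q u)
    (hW : Continuous W) (hφ : ContDiff ℝ 1 φ) (hφc : HasCompactSupport φ) :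
    ConnectingCurve W A B (fun t => q t + φ t) (fun t => u t + deriv φ t) := by
  have hφ' : Continuous (deriv φ) := hφ.continuous_deriv le_rfl
  have heq : (fun t => q t + φ t) =ᶠ[cocompact ℝ] q := by
    rw [← coclosedCompact_eq_cocompact]
    filter_upwards [hasCompactSupport_iff_eventuallyEq.1 hφc] with t ht
    simp [ht]
  rw [cocompact_eq_atBot_atTop, EventuallyEq, eventually_sup] at heq
  refine ⟨⟨⟨h.memLp.add (hφ'.memLp_of_hasCompactSupport hφc.deriv), fun a b => ?_⟩, ?_⟩,
    fun ε hε => ?_, fun ε hε => ?_⟩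
  · rw [intervalIntegral.integral_add (h.intervalIntegrable a b) (hφ'.intervalIntegrable a b),
      ← h.sub_eq_integral, intervalIntegral.integral_deriv_eq_sub
        (fun t _ => hφ.differentiable one_ne_zero t) (hφ'.intervalIntegrable a b)]
    abel
  · have hdiff : Integrable fun t => W (q t + φ t) - W (q t) := by
      refine Continuous.integrable_of_hasCompactSupport ?_ (hφc.mono fun t ht hφt => ht ?_)
      · have := h.continuous
        have := hφ.continuous
        fun_prop
      · simp [hφt]
    exact (hdiff.add h.integrable_potential).congr
      (Eventually.of_forall fun t => sub_add_cancel _ _)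
  · exact ((h.frequently_near_left ε hε).and_eventually heq.1).mono fun t ⟨ht, hteq⟩ =>
      by rwa [hteq]
  · exact ((h.frequently_near_right ε hε).and_eventually heq.2).mono fun t ⟨ht, hteq⟩ =>
      by rwa [hteq]

theorem HasL2Deriv.hasDerivAt_of_ae_eq [CompleteSpace E] (h : HasL2Deriv q u) {g : ℝ → E}
    (hg : Continuous g) {a b : ℝ} (hae : ∀ᵐ t, t ∈ Ioo a b → u t = g t) {t : ℝ}
    (ht : t ∈ Ioo a b) : HasDerivAt q (g t) t := by
  have hd := ((hg.integral_hasStrictDerivAt a t).hasDerivAt).const_add (q a)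
  refine hd.congr_of_eventuallyEq ?_
  filter_upwards [isOpen_Ioo.mem_nhds ht] with s hs
  rw [h.eq_add_integral a s, intervalIntegral.integral_of_le hs.1.le,
    intervalIntegral.integral_of_le hs.1.le]
  congr 1
  refine setIntegral_congr_ae measurableSet_Ioc (hae.mono fun r hr hrs => ?_)
  exact hr ⟨hrs.1, hrs.2.trans_lt hs.2⟩

theorem HasL2Deriv.ae_eq_deriv [CompleteSpace E] (h : HasL2Deriv q u) : ∀ᵐ t, u t = deriv q t := by
  filter_upwards [LocallyIntegrable.ae_hasDerivAt_integral
    (h.memLp.locallyIntegrable one_le_two)] with t ht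
  have hd := (ht 0).const_add (q 0)
  rw [← funext (h.eq_add_integral 0)] at hd
  exact hd.deriv.symm

end

variable {E : Type*} [NormedAddCommGroup E] [InnerProductSpace ℝ E] [CompleteSpace E]
  {W U : E → ℝ} {A B Ω : Set E} {q u φ : ℝ → E}

namespace IsActionMinimizer

theorem integral_inner_deriv_add_integral_inner_gradient (h : IsActionMinimizer W A B q u)
    (hW : Continuous W) (hU : ContDiff ℝ 1 U) (hΩ : IsOpen Ω) (hWU : EqOn W U Ω)
    (hφ : ContDiff ℝ 1 φ) (hφc : HasCompactSupport φ) (hqΩ : ∀ t ∈ tsupport φ, q t ∈ Ω) :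
    (∫ t, inner ℝ (u t) (deriv φ t)) + ∫ t, inner ℝ (gradient U (q t)) (φ t) = 0 := by
  have hcurve (ε : ℝ) :
      ConnectingCurve W A B (fun t => q t + ε • φ t) (fun t => u t + ε • deriv φ t) := by
    simpa only [deriv_fun_const_smul ε (hφ.differentiable one_ne_zero _), Pi.smul_apply] using
      h.add_of_hasCompactSupport hW (hφ.const_smul ε)
        (hφc.mono (Function.support_const_smul_subset ε φ))
  have hmin : IsLocalMin
      (fun ε : ℝ => action W (fun t => q t + ε • φ t) (fun t => u t + ε • deriv φ t)) 0 :=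
    Eventually.of_forall fun ε => by simpa using h.action_le _ _ (hcurve ε)
  simp only [(hcurve _).action_eq] at hmin
  have hkin := (hasDerivAt_integral_norm_sq_add_smul h.memLp
    ((hφ.continuous_deriv le_rfl).memLp_of_hasCompactSupport hφc.deriv)).const_mul 2⁻¹
  have hpot := hasDerivAt_integral_comp_add_smul hW hU hΩ hWU h.continuous h.integrable_potential
    hφ.continuous hφc hqΩ
  simpa using hmin.hasDerivAt_eq_zero (hkin.fun_add hpot)

theorem exists_ae_eq_add_integral_gradient (h : IsActionMinimizer W A B q u)
    (hW : Continuous W) (hU : ContDiff ℝ 1 U) (hΩ : IsOpen Ω) (hWU : EqOn W U Ω) {a b : ℝ}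
    (hab : a < b) (hqΩ : MapsTo q (Icc a b) Ω) :
    ∃ C, ∀ᵐ t, t ∈ Ioo a b → u t = C + ∫ s in a..t, gradient U (q s) := by
  have hg : Continuous fun t => gradient U (q t) := (continuous_gradient hU).comp h.continuous
  have hu : LocallyIntegrable u := h.memLp.locallyIntegrable one_le_two
  refine exists_ae_eq_add_primitive hu hg hab fun ψ hψ hs => ext_inner_left ℝ fun e => ?_
  have hψc : HasCompactSupport ψ := isCompact_Icc.of_isClosed_subset (isClosed_tsupport ψ) hs
  have hψ' : Continuous (deriv ψ) := hψ.continuous_deriv le_rfl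
  have hEL := h.integral_inner_deriv_add_integral_inner_gradient hW hU hΩ hWU
    (φ := fun t => ψ t • e) (hψ.smul contDiff_const) hψc.smul_right
    fun t ht => hqΩ (hs (tsupport_smul_subset_left ψ _ ht))
  have hderiv (t : ℝ) : deriv (fun t => ψ t • e) t = deriv ψ t • e :=
    deriv_smul_const (hψ.differentiable one_ne_zero t) e
  simp only [hderiv, real_inner_smul_right] at hEL
  rw [inner_add_right, inner_zero_right, ← integral_inner, ← integral_inner]
  · simpa only [real_inner_smul_right, real_inner_comm] using hEL
  · exact hg.locallyIntegrable.integrable_smul_left_of_hasCompactSupport hψ.continuous hψc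
  · exact hu.integrable_smul_left_of_hasCompactSupport hψ' hψc.deriv

theorem differentiableAt_and_hasDerivAt_deriv (h : IsActionMinimizer W A B q u)
    (hW : Continuous W) (hU : ContDiff ℝ 1 U) (hΩ : IsOpen Ω) (hWU : EqOn W U Ω) {t : ℝ}
    (ht : q t ∈ Ω) : DifferentiableAt ℝ q t ∧ HasDerivAt (deriv q) (gradient U (q t)) t := by
  obtain ⟨δ, hδ, hball⟩ := nhds_basis_closedBall.mem_iff.1
    ((hΩ.preimage h.continuous).mem_nhds ht)
  rw [Real.closedBall_eq_Icc] at hball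
  obtain ⟨C, hC⟩ := h.exists_ae_eq_add_integral_gradient hW hU hΩ hWU
    (by linarith : t - δ < t + δ) hball
  have hg : Continuous fun t => gradient U (q t) := (continuous_gradient hU).comp h.continuous
  have hv (s : ℝ) : HasDerivAt (fun r => C + ∫ x in (t - δ)..r, gradient U (q x))
      (gradient U (q s)) s :=
    ((hg.integral_hasStrictDerivAt (t - δ) s).hasDerivAt).const_add C
  have hvc := continuous_iff_continuousAt.2 fun s => (hv s).continuousAt
  have hq {s : ℝ} (hs : s ∈ Ioo (t - δ) (t + δ)) := h.hasDerivAt_of_ae_eq hvc hC hs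
  have htmem : t ∈ Ioo (t - δ) (t + δ) := ⟨by linarith, by linarith⟩
  refine ⟨(hq htmem).differentiableAt, (hv t).congr_of_eventuallyEq ?_⟩
  filter_upwards [isOpen_Ioo.mem_nhds htmem] with s hs using (hq hs).deriv

end IsActionMinimizer

end EulerLagrange

section FreeInterval

theorem nonempty_inter_frontier {X : Type*} [TopologicalSpace X] {s I : Set X}
    (hs : IsPreconnected s) (hI : (s ∩ interior I).Nonempty) (hsI : ¬s ⊆ I) :
    (s ∩ frontier I).Nonempty := by
  by_contra hempty
  refine hsI ((hs.subset_left_of_subset_union isOpen_interior isClosed_closure.isOpen_compl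
    (disjoint_compl_right.mono_left interior_subset_closure) (fun x hx => ?_) hI).trans
      interior_subset)
  by_contra hx'
  rw [mem_union, mem_compl_iff, not_or, not_not] at hx'
  exact hempty ⟨x, hx, hx'.2, hx'.1⟩

/-- The largest interval of times around `0` during which the curve `q` avoids `Z`. -/
def freeInterval {X : Type*} (Z : Set X) (q : ℝ → X) : Set ℝ :=
  connectedComponentIn (q ⁻¹' Zᶜ) 0

variable {X : Type*} {Z : Set X} {q : ℝ → X} {t : ℝ}

theorem zero_mem_freeInterval (h0 : q 0 ∉ Z) : 0 ∈ freeInterval Z q :=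
  mem_connectedComponentIn h0

theorem isPreconnected_freeInterval : IsPreconnected (freeInterval Z q) :=
  isPreconnected_connectedComponentIn

theorem notMem_of_mem_freeInterval (ht : t ∈ freeInterval Z q) : q t ∉ Z :=
  connectedComponentIn_subset _ _ ht

theorem freeInterval_comp_neg (h0 : q 0 ∉ Z) :
    freeInterval Z (fun t => q (-t)) = Neg.neg ⁻¹' freeInterval Z q := by
  have h := (Homeomorph.neg ℝ).image_connectedComponentIn (s := q ⁻¹' Zᶜ) (x := 0) h0
  rw [Homeomorph.coe_neg, neg_zero, image_neg_eq_neg, image_neg_eq_neg] at h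
  exact h.symm

variable [TopologicalSpace X]

theorem isOpen_freeInterval (hZ : IsClosed Z) (hq : Continuous q) : IsOpen (freeInterval Z q) :=
  (hZ.isOpen_compl.preimage hq).connectedComponentIn

theorem mem_of_mem_frontier_freeInterval (hZ : IsClosed Z) (hq : Continuous q)
    (ht : t ∈ frontier (freeInterval Z q)) : q t ∈ Z := by
  by_contra hmem
  have hopen : IsOpen (q ⁻¹' Zᶜ) := hZ.isOpen_compl.preimage hq
  obtain ⟨s, hst, hs⟩ := mem_closure_iff_nhds.1 ht.1 _
    (hopen.connectedComponentIn.mem_nhds (mem_connectedComponentIn hmem))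
  refine ht.2 (mem_interior_iff_mem_nhds.2 ?_)
  rw [freeInterval, connectedComponentIn_eq hs, ← connectedComponentIn_eq hst]
  exact hopen.connectedComponentIn.mem_nhds (mem_connectedComponentIn hmem)

theorem Iic_subset_freeInterval_or (hZ : IsClosed Z) (hq : Continuous q) (h0 : q 0 ∉ Z) :
    Iic 0 ⊆ freeInterval Z q ∨
      ∃ a ≤ 0, a ∈ frontier (freeInterval Z q) ∧ ∀ t ≤ 0, t ∉ freeInterval Z q → t ≤ a := by
  have h0I : 0 ∈ interior (freeInterval Z q) := by
    rw [(isOpen_freeInterval hZ hq).interior_eq]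
    exact zero_mem_freeInterval h0
  refine or_iff_not_imp_left.2 fun hsub => ?_
  obtain ⟨a, ha, hfr⟩ := nonempty_inter_frontier isPreconnected_Iic
    ⟨0, self_mem_Iic, h0I⟩ hsub
  refine ⟨a, ha, hfr, fun t ht htI => le_of_not_gt fun hat => htI ?_⟩
  rcases ht.eq_or_lt with rfl | ht0
  · exact interior_subset h0I
  · refine interior_subset ((Real.convex_iff_isPreconnected.2
      isPreconnected_freeInterval).openSegment_interior_closure_subset_interior h0I hfr.1 ?_)
    rw [openSegment_symm, openSegment_eq_Ioo (hat.trans ht0)]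
    exact ⟨hat, ht0⟩

end FreeInterval

section Energy

section

variable {E : Type*} [NormedAddCommGroup E] [NormedSpace ℝ E] {W : E → ℝ} {A B : Set E}
  {q u : ℝ → E}

namespace IsActionMinimizer

/-- The derivative at `l = 1` of the action of the time scaled curves `t ↦ q (l * t)` vanishes. -/
theorem integral_norm_sq_eq (h : IsActionMinimizer W A B q u) :
    2⁻¹ * ∫ t, ‖u t‖ ^ 2 = ∫ t, W (q t) := by
  have hmin : IsLocalMin (fun l : ℝ =>
      l⁻¹ * (2⁻¹ * l ^ 2 * (∫ t, ‖u t‖ ^ 2) + ∫ t, W (q t))) 1 := by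
    filter_upwards [lt_mem_nhds one_pos] with l hl
    have hle := h.action_le _ _ (h.comp_affine hl 0)
    rw [h.action_comp_affine hl.ne', abs_of_pos (inv_pos.2 hl), h.action_eq] at hle
    simpa using hle
  have hd := (hasDerivAt_inv (one_ne_zero (α := ℝ))).fun_mul
    (((((hasDerivAt_id (1 : ℝ)).fun_pow 2).const_mul 2⁻¹).mul_const (∫ t, ‖u t‖ ^ 2)).add_const
      (∫ t, W (q t)))
  have h0 := hmin.hasDerivAt_eq_zero hd
  norm_num at h0
  linarith

theorem ae_lagrangian_eq_zero [CompleteSpace E] (h : IsActionMinimizer W A B q u)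
    (hW : Continuous W) (hW0 : ∀ x, 0 ≤ W x) {a : ℝ} (ha : q a ∈ A) (hWa : W (q a) = 0) :
    ∀ᵐ t, t ≤ a → lagrangian W q u t = 0 := by
  obtain ⟨q', u', h', hle⟩ := exists_connectingCurve_action_le hW h.toFiniteAction
    h.frequently_near_right a ha hWa (b := 0) (by simp [hWa])
  have hsplit : (∫ t in Iic a, lagrangian W q u t) + ∫ t in Ioi a, lagrangian W q u t =
      action W q u := by
    rw [← compl_Iic]
    exact integral_add_compl measurableSet_Iic h.integrable_lagrangian
  have hle' := (h.action_le q' u' h').trans hle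
  simp only [sub_self, norm_zero] at hle'
  have h0 : ∫ t in Iic a, lagrangian W q u t = 0 :=
    le_antisymm (by linarith) (integral_nonneg (lagrangian_nonneg hW0 q u))
  exact (ae_restrict_iff' measurableSet_Iic).1 ((setIntegral_eq_zero_iff_of_nonneg_ae
    (Eventually.of_forall (lagrangian_nonneg hW0 q u)) h.integrable_lagrangian.integrableOn).1 h0)

end IsActionMinimizer

end

variable {E : Type*} [NormedAddCommGroup E] [InnerProductSpace ℝ E] [CompleteSpace E]
  {W U : E → ℝ} {A B : Set E} {q u p : ℝ → E}

theorem exists_energy_eq (hU : ContDiff ℝ 1 U) {I : Set ℝ} (hI : IsOpen I)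
    (hIc : IsPreconnected I) (hp : ∀ t ∈ I, DifferentiableAt ℝ p t)
    (hp' : ∀ t ∈ I, HasDerivAt (deriv p) (gradient U (p t)) t) :
    ∃ e, ∀ t ∈ I, 2⁻¹ * ‖deriv p t‖ ^ 2 - U (p t) = e := by
  have hd (t : ℝ) (ht : t ∈ I) :
      HasDerivAt (fun s => 2⁻¹ * ‖deriv p s‖ ^ 2 - U (p s)) 0 t := by
    refine (((hp' t ht).norm_sq.const_mul 2⁻¹).fun_sub (hasDerivAt_comp_of_hasGradientAt
      (hU.differentiable one_ne_zero _).hasGradientAt (hp t ht).hasDerivAt)).congr_deriv ?_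
    rw [real_inner_comm]
    ring
  exact hI.exists_is_const_of_deriv_eq_zero hIc
    (fun t ht => (hd t ht).differentiableAt.differentiableWithinAt) fun t ht => (hd t ht).deriv

end Energy

section Solutions

/-- `p` solves `p̈ = ∇U(p)` with zero energy, `½|ṗ|² = U(p)`, at the time `t`. -/
structure SolvesAt {E : Type*} [NormedAddCommGroup E] [InnerProductSpace ℝ E] [CompleteSpace E]
    (U : E → ℝ) (p : ℝ → E) (t : ℝ) : Prop where
  differentiableAt : DifferentiableAt ℝ p t
  hasDerivAt_deriv : HasDerivAt (deriv p) (gradient U (p t)) t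
  energy : 2⁻¹ * ‖deriv p t‖ ^ 2 = U (p t)

theorem eq_zero_of_integral_indicator_const_eq_zero {I : Set ℝ} (hI : IsOpen I)
    (hne : I.Nonempty) {e : ℝ} (hint : Integrable (I.indicator fun _ => e))
    (h0 : ∫ t, I.indicator (fun _ => e) t = 0) : e = 0 := by
  rw [integrable_indicator_iff hI.measurableSet, integrableOn_const_iff, enorm_eq_zero] at hint
  rw [integral_indicator_const e hI.measurableSet, smul_eq_mul, mul_eq_zero] at h0
  exact hint.elim id fun hfin => h0.resolve_left
    (ENNReal.toReal_pos (hI.measure_pos volume hne).ne' hfin.ne).ne'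

namespace TwoWell

theorem exists_infDist_lt_of_frequently {X : Type*} [MetricSpace X] {W : X → ℝ} {A B : Set X}
    {q : ℝ → X} (w : TwoWell W A B) (hq : Continuous q) (h0 : q 0 ∉ A ∪ B)
    (hB : ∀ t ≤ 0, q t ∉ B) {ε : ℝ} (hε : 0 < ε) (hfreq : ∃ᶠ t in atBot, infDist (q t) A < ε) :
    ∃ t ∈ closure (freeInterval (A ∪ B) q), infDist (q t) A < ε := by
  rcases Iic_subset_freeInterval_or w.isClosed_union hq h0 with hsub | ⟨a, ha, hfr, -⟩
  · obtain ⟨t, hlt, ht⟩ := (hfreq.and_eventually (eventually_le_atBot 0)).exists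
    exact ⟨t, subset_closure (hsub ht), hlt⟩
  · have haA := (mem_of_mem_frontier_freeInterval w.isClosed_union hq hfr).resolve_right (hB a ha)
    exact ⟨a, hfr.1, by rwa [infDist_zero_of_mem haA]⟩

section

variable {E : Type*} [NormedAddCommGroup E] [NormedSpace ℝ E] [CompleteSpace E]
  {W : E → ℝ} {A B : Set E} {q u : ℝ → E}

theorem ae_lagrangian_eq_zero_of_nonpos (w : TwoWell W A B) (h : IsActionMinimizer W A B q u)
    (h0 : q 0 ∉ A ∪ B) (hB : ∀ t ≤ 0, q t ∉ B) :
    ∀ᵐ t, t ≤ 0 → t ∉ freeInterval (A ∪ B) q → lagrangian W q u t = 0 := by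
  rcases Iic_subset_freeInterval_or w.isClosed_union h.continuous h0 with
    hsub | ⟨a, ha, hfr, hle⟩
  · exact Eventually.of_forall fun t ht htI => absurd (hsub ht) htI
  · have haA := (mem_of_mem_frontier_freeInterval w.isClosed_union h.continuous hfr).resolve_right
      (hB a ha)
    exact (h.ae_lagrangian_eq_zero w.continuous w.nonneg haA (w.eq_zero_left haA)).mono
      fun t hat ht htI => hat (hle t ht htI)

theorem ae_lagrangian_eq_zero_of_notMem (w : TwoWell W A B) (h : IsActionMinimizer W A B q u)
    (hB : ∀ t ≤ 0, q t ∉ B) (hA : ∀ t ≥ 0, q t ∉ A) :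
    ∀ᵐ t, t ∉ freeInterval (A ∪ B) q → lagrangian W q u t = 0 := by
  have h0 : q 0 ∉ A ∪ B := not_or.2 ⟨hA 0 le_rfl, hB 0 le_rfl⟩
  have hright := w.symm.ae_lagrangian_eq_zero_of_nonpos h.reverse
    (by simpa [or_comm] using h0) fun t ht => hA (-t) (neg_nonneg.2 ht)
  rw [union_comm, freeInterval_comp_neg h0] at hright
  filter_upwards [w.ae_lagrangian_eq_zero_of_nonpos h h0 hB,
    (Measure.measurePreserving_neg (volume : Measure ℝ)).quasiMeasurePreserving.ae hright]
    with t hleft hright htI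
  rcases le_total t 0 with ht | ht
  · exact hleft ht htI
  · simpa [lagrangian] using hright (neg_nonpos.2 ht) (by simpa using htI)

end

variable {E : Type*} [NormedAddCommGroup E] [InnerProductSpace ℝ E] [CompleteSpace E]
  {W U : E → ℝ} {A B : Set E} {q u : ℝ → E}

theorem solvesAt_of_mem_freeInterval (w : TwoWell W A B) (h : IsActionMinimizer W A B q u)
    (hB : ∀ t ≤ 0, q t ∉ B) (hA : ∀ t ≥ 0, q t ∉ A) (hU : ContDiff ℝ 1 U)
    (hWU : EqOn W U (A ∪ B)ᶜ) {t : ℝ} (ht : t ∈ freeInterval (A ∪ B) q) : SolvesAt U q t := by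
  set I := freeInterval (A ∪ B) q
  have hIo : IsOpen I := isOpen_freeInterval w.isClosed_union h.continuous
  have hEL (s : ℝ) (hs : s ∈ I) := h.differentiableAt_and_hasDerivAt_deriv w.continuous hU
    w.isClosed_union.isOpen_compl hWU (notMem_of_mem_freeInterval hs)
  obtain ⟨e, he⟩ := exists_energy_eq hU hIo isPreconnected_freeInterval (fun s hs => (hEL s hs).1)
    fun s hs => (hEL s hs).2
  have hint : Integrable fun s => 2⁻¹ * ‖u s‖ ^ 2 - W (q s) :=
    (h.integrable_norm_sq.const_mul _).sub h.integrable_potential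
  have hae : (fun s => 2⁻¹ * ‖u s‖ ^ 2 - W (q s)) =ᵐ[volume] I.indicator fun _ => e := by
    filter_upwards [h.ae_eq_deriv, w.ae_lagrangian_eq_zero_of_notMem h hB hA] with s hus hlag
    by_cases hs : s ∈ I
    · rw [indicator_of_mem hs, hus, hWU (notMem_of_mem_freeInterval hs), he s hs]
    · rw [indicator_of_notMem hs]
      have := hlag hs
      unfold lagrangian at this
      linarith [sq_nonneg ‖u s‖, w.nonneg (q s)]
  have hzero : e = 0 := by
    refine eq_zero_of_integral_indicator_const_eq_zero hIo ⟨t, ht⟩ (hint.congr hae) ?_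
    rw [← integral_congr_ae hae, integral_sub (h.integrable_norm_sq.const_mul _)
      h.integrable_potential, integral_const_mul, h.integral_norm_sq_eq, sub_self]
  exact ⟨(hEL t ht).1, (hEL t ht).2, sub_eq_zero.1 ((he t ht).trans hzero)⟩

end TwoWell

end Solutions

section Reflection

theorem forall_of_reflections {P : ℝ → Prop} {a b : ℝ} (hab : a < b)
    (ha : ∀ t, P (2 * a - t) ↔ P t) (hb : ∀ t, P (2 * b - t) ↔ P t) (h : ∀ t ∈ Icc a b, P t)
    (t : ℝ) : P t := by
  have hper : Function.Periodic P (2 * (b - a)) := fun t => by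
    rw [← propext (ha t), ← propext (hb (2 * a - t))]
    ring_nf
  obtain ⟨s, ⟨has, hsa⟩, hPs⟩ := hper.exists_mem_Ico (by linarith) t a
  rw [hPs]
  rcases le_total s b with hsb | hbs
  · exact h s ⟨has, hsb⟩
  · exact (hb s).1 (h _ ⟨by linarith, by linarith⟩)

theorem hasDerivAt_of_tendsto_deriv {F : Type*} [NormedAddCommGroup F] [NormedSpace ℝ F]
    {f : ℝ → F} {a : ℝ} {e : F} (hf : ContinuousAt f a)
    (hd : ∀ᶠ t in 𝓝[≠] a, DifferentiableAt ℝ f t) (hlim : Tendsto (deriv f) (𝓝[≠] a) (𝓝 e)) :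
    HasDerivAt f e a := by
  have hdiff : DifferentiableOn ℝ f {t | DifferentiableAt ℝ f t} :=
    fun t ht => DifferentiableAt.differentiableWithinAt ht
  have hright := hasDerivWithinAt_Ici_of_tendsto_deriv hdiff hf.continuousWithinAt
    (nhdsGT_le_nhdsNE a hd) (hlim.mono_left (nhdsGT_le_nhdsNE a))
  have hleft := hasDerivWithinAt_Iic_of_tendsto_deriv hdiff hf.continuousWithinAt
    (nhdsLT_le_nhdsNE a hd) (hlim.mono_left (nhdsLT_le_nhdsNE a))
  simpa [Iic_union_Ici] using hleft.union hright

variable {E : Type*} [NormedAddCommGroup E] [InnerProductSpace ℝ E] [CompleteSpace E]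
  {U : E → ℝ} {p q : ℝ → E} {a b t : ℝ}

namespace SolvesAt

theorem congr_of_eventuallyEq (h : SolvesAt U q t) (hpq : p =ᶠ[𝓝 t] q) : SolvesAt U p t where
  differentiableAt := h.differentiableAt.congr_of_eventuallyEq hpq
  hasDerivAt_deriv := by
    rw [hpq.eq_of_nhds]
    exact h.hasDerivAt_deriv.congr_of_eventuallyEq hpq.deriv
  energy := by rw [hpq.deriv_eq, hpq.eq_of_nhds, h.energy]

theorem comp_const_sub (c : ℝ) (h : SolvesAt U p (c - t)) : SolvesAt U (fun s => p (c - s)) t where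
  differentiableAt := (h.differentiableAt.hasDerivAt.comp_const_sub c t).differentiableAt
  hasDerivAt_deriv := by
    rw [funext fun s => deriv_comp_const_sub (f := p) c s]
    simpa using (h.hasDerivAt_deriv.comp_const_sub c t).fun_neg
  energy := by rw [deriv_comp_const_sub, norm_neg, h.energy]

end SolvesAt

theorem solvesAt_reflection_iff (hsymm : ∀ t, p (2 * a - t) = p t) (t : ℝ) :
    SolvesAt U p (2 * a - t) ↔ SolvesAt U p t := by
  have key (t : ℝ) (h : SolvesAt U p (2 * a - t)) : SolvesAt U p t := by
    simpa only [hsymm] using h.comp_const_sub (2 * a)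
  exact ⟨key t, fun h => key _ (by rwa [sub_sub_cancel])⟩

/-- Since `½|ṗ|² = U(p)` tends to `0` at `a`, the velocity extends continuously by `0`. -/
theorem solvesAt_of_eventually_nhdsNE (hU : ContDiff ℝ 1 U) (hp : ContinuousAt p a)
    (h0 : U (p a) = 0) (h : ∀ᶠ t in 𝓝[≠] a, SolvesAt U p t) : SolvesAt U p a := by
  have hpa : Tendsto p (𝓝[≠] a) (𝓝 (p a)) := hp.tendsto.mono_left nhdsWithin_le_nhds
  have hvel : Tendsto (deriv p) (𝓝[≠] a) (𝓝 0) := by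
    have hsqrt := (((hU.continuous.tendsto (p a)).comp hpa).const_mul 2).sqrt
    rw [h0, mul_zero, Real.sqrt_zero] at hsqrt
    refine squeeze_zero_norm' (h.mono fun t ht => Real.le_sqrt_of_sq_le ?_) hsqrt
    rw [Function.comp_apply, ← ht.energy]
    linarith
  have hd : HasDerivAt p 0 a :=
    hasDerivAt_of_tendsto_deriv hp (h.mono fun t ht => ht.differentiableAt) hvel
  refine ⟨hd.differentiableAt, hasDerivAt_of_tendsto_deriv ?_
    (h.mono fun t ht => ht.hasDerivAt_deriv.differentiableAt) ?_, by simp [hd.deriv, h0]⟩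
  · rwa [continuousAt_iff_punctured_nhds, hd.deriv]
  · exact (((continuous_gradient hU).tendsto (p a)).comp hpa).congr'
      (h.mono fun t ht => ht.hasDerivAt_deriv.deriv.symm)

theorem exists_extension_of_Ioi (hU : ContDiff ℝ 1 U) (hq : Continuous q)
    (h : ∀ t ∈ Ioi a, SolvesAt U q t) (ha : U (q a) = 0) :
    ∃ p, (∀ t, SolvesAt U p t) ∧ EqOn p q (Ici a) := by
  set p : ℝ → E := fun t => q (a + |t - a|)
  have hpq : EqOn p q (Ici a) := fun t ht => by
    simp only [p, abs_of_nonneg (sub_nonneg.2 (mem_Ici.1 ht)), add_sub_cancel]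
  have hsymm (t : ℝ) : p (2 * a - t) = p t := by
    simp only [p, ← abs_neg (t - a)]
    ring_nf
  have hright (t : ℝ) (ht : a < t) : SolvesAt U p t :=
    (h t ht).congr_of_eventuallyEq (hpq.eventuallyEq_of_mem (Ici_mem_nhds ht))
  have hne (t : ℝ) (ht : t ≠ a) : SolvesAt U p t := by
    rcases ht.lt_or_gt with hlt | hgt
    · exact (solvesAt_reflection_iff hsymm t).1 (hright _ (by linarith))
    · exact hright t hgt
  refine ⟨p, fun t => ?_, hpq⟩
  rcases eq_or_ne t a with rfl | ht
  · exact solvesAt_of_eventually_nhdsNE hU (by fun_prop) (by rw [hpq self_mem_Ici, ha])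
      (eventually_nhdsWithin_of_forall hne)
  · exact hne t ht

theorem exists_extension_of_Iio (hU : ContDiff ℝ 1 U) (hq : Continuous q)
    (h : ∀ t ∈ Iio b, SolvesAt U q t) (hb : U (q b) = 0) :
    ∃ p, (∀ t, SolvesAt U p t) ∧ EqOn p q (Iic b) := by
  obtain ⟨p, hp, hpq⟩ := exists_extension_of_Ioi (q := fun t => q (0 - t)) (a := -b) hU
    (by fun_prop) (fun t ht => (h _ (by simpa using neg_lt.1 ht)).comp_const_sub 0) (by simpa)
  refine ⟨fun t => p (0 - t), fun t => (hp _).comp_const_sub 0, fun t ht => ?_⟩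
  simpa using hpq (show 0 - t ∈ Ici (-b) by simpa using ht)

theorem exists_symmetric_extension_of_Icc {X : Type*} [TopologicalSpace X] {q : ℝ → X}
    (hq : Continuous q) (hab : a < b) :
    ∃ p, Continuous p ∧ EqOn p q (Icc a b) ∧ (∀ t, p (2 * a - t) = p t) ∧
      ∀ t, p (2 * b - t) = p t := by
  have hsymm (t : ℝ) : ‖((a - t : ℝ) : AddCircle (2 * (b - a)))‖ =
      ‖((t - a : ℝ) : AddCircle (2 * (b - a)))‖ := by
    rw [← neg_sub t a, AddCircle.coe_neg, norm_neg]
  refine ⟨fun t => q (a + ‖((t - a : ℝ) : AddCircle (2 * (b - a)))‖), ?_, fun t ht => ?_,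
    fun t => ?_, fun t => ?_⟩
  · exact hq.comp (continuous_const.add
      ((AddCircle.continuous_mk' _).comp (continuous_sub_right a)).norm)
  · have hnn : 0 ≤ t - a := sub_nonneg.2 ht.1
    simp only
    rw [(AddCircle.norm_coe_eq_abs_iff _ (by linarith)).2, abs_of_nonneg hnn, add_sub_cancel]
    rw [abs_of_nonneg hnn, abs_of_pos (by linarith)]
    linarith [ht.2]
  · simp only [← hsymm t]
    ring_nf
  · simp only [← hsymm t]
    rw [show 2 * b - t - a = a - t + 2 * (b - a) by ring, AddCircle.coe_add_period]

theorem exists_extension_of_Ioo (hU : ContDiff ℝ 1 U) (hq : Continuous q) (hab : a < b)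
    (h : ∀ t ∈ Ioo a b, SolvesAt U q t) (ha : U (q a) = 0) (hb : U (q b) = 0) :
    ∃ p, (∀ t, SolvesAt U p t) ∧ EqOn p q (Icc a b) := by
  obtain ⟨p, hp, hpq, hpa, hpb⟩ := exists_symmetric_extension_of_Icc hq hab
  have hmid (t : ℝ) (ht : t ∈ Ioo a b) : SolvesAt U p t :=
    (h t ht).congr_of_eventuallyEq (hpq.eventuallyEq_of_mem (Icc_mem_nhds ht.1 ht.2))
  refine ⟨p, forall_of_reflections hab (solvesAt_reflection_iff hpa)
    (solvesAt_reflection_iff hpb) fun t ht => ?_, hpq⟩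
  rcases ht.1.eq_or_lt with rfl | hat
  · refine solvesAt_of_eventually_nhdsNE hU hp.continuousAt (by rw [hpq ht, ha]) ?_
    filter_upwards [self_mem_nhdsWithin, mem_nhdsWithin_of_mem_nhds
      (Ioo_mem_nhds (show 2 * a - b < a by linarith) hab)] with s hne hs
    rcases (show s ≠ a from hne).lt_or_gt with hlt | hgt
    · exact (solvesAt_reflection_iff hpa s).1 (hmid _ ⟨by linarith, by linarith [hs.1]⟩)
    · exact hmid s ⟨hgt, hs.2⟩
  rcases ht.2.eq_or_lt with rfl | htb
  · refine solvesAt_of_eventually_nhdsNE hU hp.continuousAt (by rw [hpq ht, hb]) ?_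
    filter_upwards [self_mem_nhdsWithin, mem_nhdsWithin_of_mem_nhds
      (Ioo_mem_nhds hab (show t < 2 * t - a by linarith))] with s hne hs
    rcases (show s ≠ t from hne).lt_or_gt with hlt | hgt
    · exact hmid s ⟨hs.1, hlt⟩
    · exact (solvesAt_reflection_iff hpb s).1 (hmid _ ⟨by linarith [hs.2], by linarith⟩)
  exact hmid t ⟨hat, htb⟩

theorem eq_interval_of_isOpen_of_isPreconnected {I : Set ℝ} (hI : IsOpen I)
    (hIc : IsPreconnected I) :
    I = ∅ ∨ I = univ ∨ (∃ a, I = Ioi a) ∨ (∃ b, I = Iio b) ∨ ∃ a b, a < b ∧ I = Ioo a b := by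
  have hint := hI.interior_eq
  have hIoo (a b : ℝ) (h : I = Ioo a b) : I = ∅ ∨ ∃ a b, a < b ∧ I = Ioo a b := by
    rcases lt_or_ge a b with hab | hba
    · exact Or.inr ⟨a, b, hab, h⟩
    · exact Or.inl (h.trans (Ioo_eq_empty_of_le hba))
  have hcases := hIc.mem_intervals
  simp only [mem_insert_iff, mem_singleton_iff] at hcases
  rcases hcases with h | h | h | h | h | h | h | h | h | h <;>
    grind [interior_Icc, interior_Ico, interior_Ioc, interior_Ici, interior_Iic]

theorem exists_extension (hU : ContDiff ℝ 1 U) (hq : Continuous q) {I : Set ℝ} (hI : IsOpen I)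
    (hIc : IsPreconnected I) (hne : I.Nonempty) (h : ∀ t ∈ I, SolvesAt U q t)
    (h0 : ∀ t ∈ frontier I, U (q t) = 0) :
    ∃ p, (∀ t, SolvesAt U p t) ∧ EqOn p q (closure I) := by
  rcases eq_interval_of_isOpen_of_isPreconnected hI hIc with
    rfl | rfl | ⟨a, rfl⟩ | ⟨b, rfl⟩ | ⟨a, b, hab, rfl⟩
  · exact absurd hne not_nonempty_empty
  · exact ⟨q, fun t => h t (mem_univ t), eqOn_refl q _⟩
  · rw [closure_Ioi]
    exact exists_extension_of_Ioi hU hq h (h0 a (by simp))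
  · rw [closure_Iio]
    exact exists_extension_of_Iio hU hq h (h0 b (by simp))
  · rw [closure_Ioo hab.ne]
    exact exists_extension_of_Ioo hU hq hab h (h0 a (by simp [frontier_Ioo hab]))
      (h0 b (by simp [frontier_Ioo hab]))

end Reflection

section Connection

theorem iInf_eq_zero_of_forall_exists_lt {ι : Type*} {f : ι → ℝ} (hf : ∀ i, 0 ≤ f i)
    (h : ∀ ε > 0, ∃ i, f i < ε) : ⨅ i, f i = 0 := by
  refine le_antisymm (le_of_forall_pos_lt_add fun ε hε => ?_) (Real.iInf_nonneg hf)
  obtain ⟨i, hi⟩ := h ε hε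
  rw [zero_add]
  exact (ciInf_le ⟨0, forall_mem_range.2 hf⟩ i).trans_lt hi

variable {E : Type*} [NormedAddCommGroup E] [InnerProductSpace ℝ E]
  {W U : E → ℝ} {A B : Set E} {p : ℝ → E}

theorem contDiff_two_of_forall_solvesAt [CompleteSpace E] (hU : ContDiff ℝ 1 U)
    (h : ∀ t, SolvesAt U p t) : ContDiff ℝ 2 p := by
  have hdiff : Differentiable ℝ p := fun t => (h t).differentiableAt
  have hderiv : ContDiff ℝ 1 (deriv p) := by
    refine contDiff_one_iff_deriv.2 ⟨fun t => (h t).hasDerivAt_deriv.differentiableAt, ?_⟩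
    rw [funext fun t => (h t).hasDerivAt_deriv.deriv]
    exact (continuous_gradient hU).comp hdiff.continuous
  rw [← one_add_one_eq_two, contDiff_succ_iff_deriv]
  exact ⟨hdiff, by simp, hderiv⟩

theorem TwoWell.exists_solution [FiniteDimensional ℝ E] (w : TwoWell W A B)
    (hU : ContDiff ℝ 1 U) (hWU : EqOn W U (A ∪ B)ᶜ) :
    ∃ p, (∀ t, SolvesAt U p t) ∧
      ⨅ t, infDist (p t) A = 0 ∧ ⨅ t, infDist (p t) B = 0 := by
  obtain ⟨q, u, h, hB, hA⟩ := w.exists_isActionMinimizer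
  have h0 : q 0 ∉ A ∪ B := not_or.2 ⟨hA 0 le_rfl, hB 0 le_rfl⟩
  have hWU' : EqOn (fun t => W (q t)) (fun t => U (q t)) (closure (freeInterval (A ∪ B) q)) :=
    EqOn.closure (fun t ht => hWU (notMem_of_mem_freeInterval ht))
      (w.continuous.comp h.continuous) (hU.continuous.comp h.continuous)
  obtain ⟨p, hp, hpq⟩ := exists_extension hU h.continuous
    (isOpen_freeInterval w.isClosed_union h.continuous) isPreconnected_freeInterval
    ⟨0, zero_mem_freeInterval h0⟩
    (fun t ht => w.solvesAt_of_mem_freeInterval h hB hA hU hWU ht)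
    fun t ht => (hWU' ht.1).symm.trans (w.eq_zero_iff.2
      (mem_of_mem_frontier_freeInterval w.isClosed_union h.continuous ht))
  refine ⟨p, hp, iInf_eq_zero_of_forall_exists_lt (fun _ => infDist_nonneg) fun ε hε => ?_,
    iInf_eq_zero_of_forall_exists_lt (fun _ => infDist_nonneg) fun ε hε => ?_⟩
  · obtain ⟨t, ht, hlt⟩ := w.exists_infDist_lt_of_frequently h.continuous h0 hB hε
      (h.frequently_near_left ε hε)
    exact ⟨t, by rwa [hpq ht]⟩
  · obtain ⟨t, ht, hlt⟩ := w.symm.exists_infDist_lt_of_frequently h.reverse.continuous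
      (by simpa [or_comm] using h0) (fun t ht => hA (-t) (neg_nonneg.2 ht)) hε
      (h.reverse.frequently_near_left ε hε)
    rw [union_comm, freeInterval_comp_neg h0, neg_preimage, ← neg_closure] at ht
    exact ⟨-t, by rwa [hpq (mem_neg.1 ht)]⟩

end Connection

section Levels

theorem iInf_eq_iInf_of_forall_lt {α ι : Type*} [CompleteLinearOrder α] {s : Set ι} {f : ι → α}
    {P : ι → Prop} {M : α} (hM : ⨅ i ∈ s, f i < M) (h : ∀ i ∈ s, f i < M → P i) :
    ⨅ i ∈ s, f i = ⨅ (i) (_ : i ∈ s) (_ : P i), f i := by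
  have hle {i : ι} (hi : i ∈ s) (hlt : f i < M) :
      ⨅ (i) (_ : i ∈ s) (_ : P i), f i ≤ f i :=
    iInf₂_le_of_le i hi (iInf_le _ (h i hi hlt))
  refine le_antisymm (iInf₂_mono fun i _ => le_iInf fun _ => le_rfl) (le_iInf₂ fun i hi => ?_)
  rcases lt_or_ge (f i) M with hlt | hge
  · exact hle hi hlt
  · obtain ⟨j, hj, hlt⟩ : ∃ j, ∃ _ : j ∈ s, f j < M := by simpa only [iInf_lt_iff] using hM
    exact (hle hj hlt).trans (hlt.le.trans hge)

/-- The excess `(V - c)⁺` of the potential `V` over the level `c`. -/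
def excess {X : Type*} (V : X → ℝ) (c : ℝ) (x : X) : ℝ :=
  max (V x - c) 0

theorem excess_of_le {X : Type*} {V : X → ℝ} {c : ℝ} {x : X} (h : c ≤ V x) :
    excess V c x = V x - c :=
  max_eq_left (sub_nonneg.2 h)

theorem twoWell_excess {X : Type*} [MetricSpace X] [ProperSpace X] {V : X → ℝ} {b c : ℝ}
    {Vm Vp : Set X} (hV : Continuous V) (hcb : c < b)
    (hb : ∀ᶠ x in Bornology.cobounded X, b ≤ V x) (hVm : IsClosed Vm) (hVp : IsClosed Vp)
    (hsplit : {x | V x ≤ c} = Vm ∪ Vp) (hsep : 0 < setDist Vm Vp) :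
    TwoWell (excess V c) Vm Vp := by
  have hcompact : IsCompact (Vm ∪ Vp) := by
    refine isCompact_of_isClosed_isBounded (hVm.union hVp) ?_
    rw [← hsplit, Bornology.isBounded_def]
    exact hb.mono fun x hx => (hcb.trans_le hx).not_ge
  have hne : (Vm ×ˢ Vp).Nonempty := by
    by_contra hempty
    rw [setDist, not_nonempty_iff_eq_empty.1 hempty, image_empty, Real.sInf_empty] at hsep
    exact hsep.false
  have hdisj : Disjoint Vm Vp := disjoint_left.2 fun x hm hp => hsep.not_ge <|
    csInf_le ⟨0, forall_mem_image.2 fun _ _ => dist_nonneg⟩ ⟨(x, x), ⟨hm, hp⟩, dist_self x⟩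
  exact
    { continuous := (hV.sub continuous_const).max continuous_const
      nonneg := fun x => le_max_right _ _
      eq_zero_iff := by simp [excess, ← hsplit]
      isCompact_left := hcompact.of_isClosed_subset hVm subset_union_left
      isCompact_right := hcompact.of_isClosed_subset hVp subset_union_right
      nonempty_left := hne.fst
      nonempty_right := hne.snd
      disjoint := hdisj
      coercive := ⟨b - c, sub_pos.2 hcb,
        hb.mono fun x hx => le_max_of_le_left (sub_le_sub_right hx c)⟩ }

variable {N : ℕ} {V : Euc N → ℝ} {c : ℝ} {Vm Vp : Set (Euc N)}

theorem IsH1loc.continuous {q u : ℝ → Euc N} (h : IsH1loc q u) : Continuous q := by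
  obtain ⟨hu, -, hsub⟩ := h
  have hint (a b : ℝ) : IntervalIntegrable u volume a b :=
    (hu.integrableOn_isCompact isCompact_uIcc).intervalIntegrable
  rw [funext fun t => sub_eq_iff_eq_add'.1 (hsub 0 t)]
  exact (intervalIntegral.continuous_primitive hint 0).const_add _

theorem integrable_of_mem_Gamma (hV : Continuous V) {p : (ℝ → Euc N) × (ℝ → Euc N)}
    (hp : p ∈ Gamma V c Vm Vp) (hfin : lagJ V c p.1 p.2 univ ≠ ∞) :
    Integrable (lagrangian (excess V c) p.1 p.2) ∧
      action (excess V c) p.1 p.2 = (lagJ V c p.1 p.2 univ).toReal := by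
  have heq (t : ℝ) :
      lagrangian (excess V c) p.1 p.2 t = 2⁻¹ * ‖p.2 t‖ ^ 2 + (V (p.1 t) - c) := by
    rw [lagrangian, excess_of_le (hp.2.1 t)]
  have hnn (t : ℝ) : 0 ≤ lagrangian (excess V c) p.1 p.2 t :=
    lagrangian_nonneg (fun x => le_max_right _ _) _ _ t
  have hlag : lagJ V c p.1 p.2 univ =
      ∫⁻ t, ENNReal.ofReal (lagrangian (excess V c) p.1 p.2 t) := by
    simp only [lagJ, heq, Measure.restrict_univ]
  have hmeas : AEStronglyMeasurable (lagrangian (excess V c) p.1 p.2) volume := by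
    rw [funext heq]
    exact ((hp.1.1.aestronglyMeasurable.norm.pow 2).const_mul _).add
      ((hV.comp hp.1.continuous).sub continuous_const).aestronglyMeasurable
  refine ⟨⟨hmeas, (hasFiniteIntegral_iff_ofReal (Eventually.of_forall hnn)).2 ?_⟩, ?_⟩
  · exact lt_top_iff_ne_top.2 (hlag ▸ hfin)
  · rw [action, hlag, integral_eq_lintegral_of_nonneg_ae (Eventually.of_forall hnn) hmeas]

theorem connectingCurve_of_mem_Gamma (hV : Continuous V) {p : (ℝ → Euc N) × (ℝ → Euc N)}
    (hp : p ∈ Gamma V c Vm Vp) (hfin : lagJ V c p.1 p.2 univ ≠ ∞) :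
    ConnectingCurve (excess V c) Vm Vp p.1 p.2 := by
  have hint := (integrable_of_mem_Gamma hV hp hfin).1
  obtain ⟨hH1, -, hleft, hright⟩ := hp
  have hVnn (t : ℝ) : 0 ≤ excess V c (p.1 t) := le_max_right _ _
  have hmeas := hH1.1.aestronglyMeasurable
  have hpot : Integrable fun t => excess V c (p.1 t) := by
    refine hint.mono' ((((hV.comp hH1.continuous).sub continuous_const).max
      continuous_const).aestronglyMeasurable) (Eventually.of_forall fun t => ?_)
    rw [Real.norm_of_nonneg (hVnn t)]
    exact le_add_of_nonneg_left (by positivity)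
  have hkin : Integrable fun t => ‖p.2 t‖ ^ 2 :=
    ((hint.sub hpot).const_mul 2).congr (Eventually.of_forall fun t => by
      simp [lagrangian])
  exact ⟨⟨⟨(memLp_two_iff_integrable_sq_norm hmeas).2 hkin, hH1.2.2⟩, hpot⟩, hleft, hright⟩

theorem exists_coercive (hV : Continuous V) (w : TwoWell (excess V c) Vm Vp) :
    ∃ R > (0 : ℝ), Coercive V c Vm Vp R := by
  rcases eq_or_ne (mc V c Vm Vp) ∞ with htop | hfin
  · exact ⟨1, one_pos, le_antisymm (iInf₂_mono fun p _ => le_iInf fun _ => le_rfl)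
      (htop ▸ le_top)⟩
  · obtain ⟨R, hR⟩ := w.exists_norm_le_of_action_le (mc V c Vm Vp + 1).toReal
    refine ⟨max R 1, by positivity, iInf_eq_iInf_of_forall_lt
      (ENNReal.lt_add_right hfin one_ne_zero) fun p hp hlt t => le_max_of_le_left ?_⟩
    refine hR _ _ (connectingCurve_of_mem_Gamma hV hp hlt.ne_top) ?_ t
    rw [(integrable_of_mem_Gamma hV hp hlt.ne_top).2]
    exact ENNReal.toReal_mono (ENNReal.add_ne_top.2 ⟨hfin, ENNReal.one_ne_top⟩) hlt.le

end Levels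

theorem doublewell_existence_general {N : ℕ} {V : Euc N → ℝ} (hV : ContDiff ℝ 1 V) {b c : ℝ}
    (hcb : c < b) (hb : ∀ᶠ x in Bornology.cobounded (Euc N), b ≤ V x) {Vm Vp : Set (Euc N)}
    (hVm : IsClosed Vm) (hVp : IsClosed Vp) (hsplit : {x | V x ≤ c} = Vm ∪ Vp)
    (hsep : 0 < setDist Vm Vp) :
    (∃ R > (0 : ℝ), Coercive V c Vm Vp R) ∧
    ∃ q : ℝ → Euc N, ContDiff ℝ 2 q ∧
      (∀ t, deriv (deriv q) t = gradient V (q t)) ∧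
      (⨅ t : ℝ, infDist (q t) Vm) = 0 ∧
      (⨅ t : ℝ, infDist (q t) Vp) = 0 ∧
      (∀ t, 2⁻¹ * ‖deriv q t‖ ^ 2 - V (q t) = -c) := by
  have w : TwoWell (excess V c) Vm Vp :=
    twoWell_excess hV.continuous hcb hb hVm hVp hsplit hsep
  have hU : ContDiff ℝ 1 fun x => V x - c := hV.sub contDiff_const
  have hWU : EqOn (excess V c) (fun x => V x - c) (Vm ∪ Vp)ᶜ := fun x hx =>
    excess_of_le (not_le.1 fun hVx : x ∈ {x | V x ≤ c} => hx (hsplit ▸ hVx)).le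
  obtain ⟨q, hq, hm, hp⟩ := w.exists_solution hU hWU
  refine ⟨exists_coercive hV.continuous w, q, contDiff_two_of_forall_solvesAt hU hq, fun t => ?_,
    hm, hp, fun t => ?_⟩
  · rw [(hq t).hasDerivAt_deriv.deriv, gradient, gradient, fderiv_sub_const]
  · rw [(hq t).energy]
    ring

/-- Proposition 3.1 (double-well potentials): for `c ∈ [0, ν₀)` such that `(V^c)` holds,
the coercivity condition (1.7) holds, and there is a connecting solution with energy `−c`. -/
theorem doublewell_existence {N : ℕ} (hN : 0 < N) (V : Euc N → ℝ) (hV : ContDiff ℝ 1 V)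
    (am ap : Euc N) (hne : am ≠ ap) (hVam : V am = 0) (hVap : V ap = 0)
    (hVpos : ∀ x, x ≠ am → x ≠ ap → 0 < V x)
    (ν₀ : ℝ) (hν₀ : 0 < ν₀)
    (hliminf₁ : ∀ b : ℝ, b < ν₀ → ∃ ρ : ℝ, ∀ x : Euc N, ρ ≤ ‖x‖ → b < V x)
    (hliminf₂ : ∀ b : ℝ, ν₀ < b → ∀ ρ : ℝ, ∃ x : Euc N, ρ ≤ ‖x‖ ∧ V x < b)
    (c : ℝ) (hc0 : 0 ≤ c) (hcν : c < ν₀)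
    (Vm Vp : Set (Euc N)) (hVm : IsClosed Vm) (hVp : IsClosed Vp)
    (hsplit : {x | V x ≤ c} = Vm ∪ Vp) (hsep : 0 < setDist Vm Vp) :
    (∃ R > (0 : ℝ), Coercive V c Vm Vp R) ∧
    ∃ q : ℝ → Euc N, ContDiff ℝ 2 q ∧
      (∀ t, deriv (deriv q) t = gradient V (q t)) ∧
      (⨅ t : ℝ, infDist (q t) Vm) = 0 ∧
      (⨅ t : ℝ, infDist (q t) Vp) = 0 ∧
      (∀ t, 2⁻¹ * ‖deriv q t‖ ^ 2 - V (q t) = -c) := by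
  obtain ⟨ρ, hρ⟩ := hliminf₁ ((c + ν₀) / 2) (by linarith)
  exact doublewell_existence_general hV (show c < (c + ν₀) / 2 by linarith)
    (hasBasis_cobounded_norm.eventually_iff.2 ⟨ρ, trivial, fun x hx => (hρ x hx).le⟩)
    hVm hVp hsplit hsep
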